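/- arXiv:2503.23164 — 2 statements merged into one kernel-verified Lean document; each statement's English description precedes it below -/
import Mathlib

section
/- Fix δ > 0 and ε > 0. Then there exist C > 0, η > 0 and n₀ such that for all n ≥ n₀, all p ∈ [δ, 1−δ] and all k with k/n ∈ [δ, 1−δ], with probability at least 1 − exp(−n^η) over G = G_{n,p} the following holds: for every z ∈ ℝ and every r ≥ n^{3/4+ε}, P_S(e(S) ∈ [z, z+r]) ≤ C·r/n, where S is a uniformly random k-element subset of [n]. -/
/-!
The probability that `e(S)` lies in an interval of length `r` is controlled by the characteristic
function of `e(S)` at frequencies up to `1 / r` (Esseen's inequality, `Pru_le_integral`), so it is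
enough to prove Gaussian decay of that function for `|θ| ≤ n ^ (-3/4)`.

A uniform `k`-set is a random relabelling of a set formed by choosing one vertex from each of `m`
pairs of a first family and each of `m` pairs of a second, together with `l` fixed vertices,
where `m` is linear in `n` and `2 m + l = k`. If `x` and `y` are the two choice functions, then `e(S)` is a function of
`x`, plus a function of `y`, plus the number of edges between the vertices chosen by `x` and those
chosen by `y` (`edgesIn_setXY`). Cauchy–Schwarz removes the first two parts, and the sum over `x`
then factorizes, so that the square of the characteristic function is at most the average over the
relabelling, `y` and `y'` of `∏ i, |cos (θ L_i / 2)|` (`norm_sq_charE_le`). Here `L_i` is a signed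
sum of `4 d` edge indicators, where `d` is the number of coordinates in which `y` and `y'` differ,
and the `L_i` use disjoint sets of edges.

If all `|L_i|` are at most `n ^ (3/4)` and `∑ i, L_i ^ 2 ≥ c n ^ 2`, the product of cosines is at
most `exp (-c θ² n² / 32)`. Let `badFrac` be the proportion of triples (relabelling, `y`, `y'`)
where this fails. Then the interval probability is `O(√badFrac + r / n)` (`Pru_le_of_badFrac`). The
expectation of `badFrac` over the random graph is exponentially small in a power of `n`
(`EG_badFrac_le`): typically `d ≥ m / 4`, the upper bound on `|L_i|` follows from exponential
moments, and the lower bound on `∑ i, L_i ^ 2` from a Chernoff argument with the functions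
`(3 + cos (θ L_i)) / 4 ≥ exp (-θ² L_i² / 4)`, whose expectations are characteristic functions and
multiply by independence. Markov's inequality concludes.
-/

open Finset MeasureTheory ProbabilityTheory

noncomputable section

/-- Uniform probability of an event `P` over a finite sample space `Ω`. -/
def Pru {α : Type*} (Ω : Finset α) (P : α → Prop) : ℝ := by
  classical exact ((Ω.filter P).card : ℝ) / Ω.card

/-- Expectation of `f` under the uniform distribution on `Ω`. -/
def Exu {α : Type*} (Ω : Finset α) (f : α → ℝ) : ℝ := (∑ a ∈ Ω, f a) / Ω.card

/-- Variance of `f` under the uniform distribution on `Ω`. -/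
def Varu {α : Type*} (Ω : Finset α) (f : α → ℝ) : ℝ := Exu Ω (fun a => (f a - Exu Ω f) ^ 2)

/-- Conditional expectation of `f` given the value of `g`, under uniform distribution on `Ω`. -/
def condExpU {α β : Type*} (Ω : Finset α) (f : α → ℝ) (g : α → β) (ω : α) : ℝ := by
  classical exact Exu (Ω.filter (fun ω' => g ω' = g ω)) f

/-- The edge set of the complete graph on `[n]`. -/
def completeEdges (n : ℕ) : Finset (Sym2 (Fin n)) := by
  classical exact Finset.univ.filter (fun e => ¬ e.IsDiag)

/-- A finset of `Sym2`s is a graph if it has no loops. -/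
def IsGraph {n : ℕ} (G : Finset (Sym2 (Fin n))) : Prop := ∀ e ∈ G, ¬ e.IsDiag

/-- The sample space of `G_{n,M}`: all graphs on `[n]` with exactly `M` edges. -/
def graphsM (n M : ℕ) : Finset (Finset (Sym2 (Fin n))) := by
  classical exact (completeEdges n).powerset.filter (fun G => G.card = M)

/-- `e(S)`: number of edges of `G` with both endpoints in `S`. -/
def edgesIn {n : ℕ} (G : Finset (Sym2 (Fin n))) (S : Finset (Fin n)) : ℕ := by
  classical exact (G.filter (fun e => ∀ v ∈ e, v ∈ S)).card

/-- `d_S(v)`: number of neighbours of `v` (in graph `G`) lying in `S`. -/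
def dS {n : ℕ} (G : Finset (Sym2 (Fin n))) (S : Finset (Fin n)) (v : Fin n) : ℕ := by
  classical exact (S.filter (fun w => s(v, w) ∈ G)).card

/-- All `k`-element subsets of `[n]`. -/
def kSets (n k : ℕ) : Finset (Finset (Fin n)) := Finset.univ.powersetCard k

/-- Probability of an event under the uniform random graph `G_{n,M}`. -/
def PrGnM (n M : ℕ) (P : Finset (Sym2 (Fin n)) → Prop) : ℝ := Pru (graphsM n M) P

/-- Probability of an event under the binomial random graph `G_{n,p}`. -/
def PrGnp (n : ℕ) (p : ℝ) (P : Finset (Sym2 (Fin n)) → Prop) : ℝ := by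
  classical exact ∑ G ∈ (completeEdges n).powerset,
    if (P G) then p ^ G.card * (1 - p) ^ ((completeEdges n).card - G.card) else 0

/-- `N = n(n-1)/2` as a real number. -/
def Nr (n : ℕ) : ℝ := (n : ℝ) * ((n : ℝ) - 1) / 2

/-- `K = k(k-1)/2` as a real number. -/
def Kr (k : ℕ) : ℝ := (k : ℝ) * ((k : ℝ) - 1) / 2

/-- `λ = ((n²-k²)k²/(2n⁴))·(M(N-M)/N²)`. -/
def lamP (n M k : ℕ) : ℝ :=
  (((n:ℝ)^2 - (k:ℝ)^2) * (k:ℝ)^2 / (2 * (n:ℝ)^4)) * ((M:ℝ) * (Nr n - (M:ℝ)) / (Nr n)^2)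

/-- The mean `K·M/N`. -/
def muP (n M k : ℕ) : ℝ := Kr k * (M:ℝ) / Nr n

/-- `W = (e(S) - K·M/N)/n`. -/
def Wfun (n M k : ℕ) (G : Finset (Sym2 (Fin n))) (S : Finset (Fin n)) : ℝ :=
  ((edgesIn G S : ℝ) - muP n M k) / n

/-- `V = Σ_v d(v)² - n·d(G)²`, i.e. `n` times the degree variance. -/
def Vdeg {n : ℕ} (G : Finset (Sym2 (Fin n))) : ℝ :=
  (∑ v : Fin n, (dS G Finset.univ v : ℝ) ^ 2) - (n:ℝ) * (2 * (G.card : ℝ) / n) ^ 2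

/-- Gaussian CDF with mean `m` and variance `v`. -/
def gaussCdf (m v z : ℝ) : ℝ := ((gaussianReal m v.toNNReal) (Set.Iic z)).toReal

/-- Gaussian measure of a set, mean `m`, variance `v`. -/
def gaussMeas (m v : ℝ) (A : Set ℝ) : ℝ := ((gaussianReal m v.toNNReal) A).toReal

/-- Gaussian density with mean `m` and variance `v`. -/
def gaussPdf (m v x : ℝ) : ℝ := gaussianPDFReal m v.toNNReal x

/-- `P(Y ∈ ·)` for `Y ~ Bin(ν, p)`. -/
def binomPr (ν : ℕ) (p : ℝ) (P : ℕ → Prop) : ℝ := by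
  classical exact ∑ j ∈ Finset.range (ν + 1),
    if (P j) then (ν.choose j : ℝ) * p ^ j * (1 - p) ^ (ν - j) else 0

/-- Sample space for "uniform `k`-set `S`, then uniform `x ∈ S` and `x̄ ∈ S̄`". -/
def SwapΩ (n k : ℕ) : Finset (Σ _ : Finset (Fin n), Fin n × Fin n) :=
  (kSets n k).sigma (fun S => S ×ˢ Sᶜ)

/-- A triple `(a, r, t)` is valid for `β`. -/
def ValidTriple (β : ℝ) (n a r t : ℕ) : Prop :=
  a ≤ r ∧
  (∃ c : ℝ, 1/2 ≤ c ∧ c ≤ 1 ∧ (a : ℝ) = c * (t:ℝ) ^ ((3:ℝ)/2) * (n:ℝ) ^ (2*β - 1/2)) ∧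
  (r : ℝ) ≤ (n:ℝ) ^ (-β) * Real.sqrt ((n:ℝ) * (t:ℝ))

/-! ### Averaging over relabellings -/

/-- The orbit of any fixed `k`-set under uniformly random permutations is a uniform `k`-set. -/
lemma sum_kSets_eq_sum_perm {n k : ℕ} (f : Finset (Fin n) → ℂ) (T : Finset (Fin n))
    (hT : T.card = k) :
    ((kSets n k).card : ℂ) * ∑ σ : Equiv.Perm (Fin n), f (T.map σ.toEmbedding)
      = (Fintype.card (Equiv.Perm (Fin n)) : ℂ) * ∑ S ∈ kSets n k, f S := by
  have hconst : ∀ U ∈ kSets n k, ∑ σ : Equiv.Perm (Fin n), f (U.map σ.toEmbedding)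
      = ∑ σ : Equiv.Perm (Fin n), f (T.map σ.toEmbedding) := by
    intro U hU
    have hUc : U.card = k := by simpa [kSets, mem_powersetCard] using hU
    obtain ⟨τ, hτ⟩ := Equiv.Perm.exists_map_finset_eq T U (by rw [hT, hUc])
    rw [← hτ]
    refine Fintype.sum_equiv (Equiv.mulRight τ) _ _ (fun σ => ?_)
    rw [Finset.map_map]
    rfl
  have hperm : ∀ σ : Equiv.Perm (Fin n), ∑ U ∈ kSets n k, f (U.map σ.toEmbedding)
      = ∑ S ∈ kSets n k, f S := by
    intro σ
    refine Finset.sum_nbij' (fun U => U.map σ.toEmbedding)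
      (fun U => U.map σ.symm.toEmbedding) ?_ ?_ ?_ ?_ ?_
    · intro U hU
      simpa [kSets, mem_powersetCard] using hU
    · intro U hU
      simpa [kSets, mem_powersetCard] using hU
    · intro U _
      ext v; simp
    · intro U _
      ext v; simp
    · intro U _
      rfl
  calc _ = ∑ U ∈ kSets n k, ∑ σ : Equiv.Perm (Fin n), f (U.map σ.toEmbedding) := by
        rw [Finset.sum_congr rfl hconst, Finset.sum_const, nsmul_eq_mul]
    _ = ∑ σ : Equiv.Perm (Fin n), ∑ U ∈ kSets n k, f (U.map σ.toEmbedding) := Finset.sum_comm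
    _ = _ := by
        rw [Finset.sum_congr rfl (fun σ _ => hperm σ), Finset.sum_const, nsmul_eq_mul]
        rfl

/-! ### Sets built from choices in pairs -/

/-- Labels for the vertices that are used: two families of `m` pairs (each pair being indexed by
`Bool`) and `l` further vertices. -/
abbrev Lab (m l : ℕ) : Type := (Fin m × Bool) ⊕ (Fin m × Bool) ⊕ Fin l

/-- The vertices chosen from the first family of pairs by `x`. -/
def setX {n m l : ℕ} (φ : Lab m l ↪ Fin n) (x : Fin m → Bool) : Finset (Fin n) :=
  univ.image (fun i => φ (Sum.inl (i, x i)))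

/-- The vertices chosen from the second family of pairs by `y`. -/
def setY {n m l : ℕ} (φ : Lab m l ↪ Fin n) (y : Fin m → Bool) : Finset (Fin n) :=
  univ.image (fun j => φ (Sum.inr (Sum.inl (j, y j))))

/-- The vertices that are always chosen. -/
def setF {n m l : ℕ} (φ : Lab m l ↪ Fin n) : Finset (Fin n) :=
  univ.image (fun c : Fin l => φ (Sum.inr (Sum.inr c)))

/-- The set obtained by choosing one vertex of each pair, together with the fixed vertices. -/
def setXY {n m l : ℕ} (φ : Lab m l ↪ Fin n) (x y : Fin m → Bool) : Finset (Fin n) :=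
  setX φ x ∪ setY φ y ∪ setF φ

lemma injX {n m l : ℕ} (φ : Lab m l ↪ Fin n) (x : Fin m → Bool) :
    Function.Injective (fun i => φ (Sum.inl (i, x i))) := by
  intro i j h
  have h' := φ.injective h
  simp only [Sum.inl.injEq, Prod.mk.injEq] at h'
  exact h'.1

lemma injY {n m l : ℕ} (φ : Lab m l ↪ Fin n) (y : Fin m → Bool) :
    Function.Injective (fun j => φ (Sum.inr (Sum.inl (j, y j)))) := by
  intro i j h
  have h' := φ.injective h
  simp only [Sum.inr.injEq, Sum.inl.injEq, Prod.mk.injEq] at h'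
  exact h'.1

lemma disjoint_XY {n m l : ℕ} (φ : Lab m l ↪ Fin n) (x y : Fin m → Bool) :
    Disjoint (setX φ x) (setY φ y) := by
  simp [setX, setY, Finset.disjoint_left]

lemma disjoint_XF {n m l : ℕ} (φ : Lab m l ↪ Fin n) (x : Fin m → Bool) :
    Disjoint (setX φ x) (setF φ) := by
  simp [setX, setF, Finset.disjoint_left]

lemma disjoint_YF {n m l : ℕ} (φ : Lab m l ↪ Fin n) (y : Fin m → Bool) :
    Disjoint (setY φ y) (setF φ) := by
  simp [setY, setF, Finset.disjoint_left]

lemma card_setXY {n m l : ℕ} (φ : Lab m l ↪ Fin n) (x y : Fin m → Bool) :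
    (setXY φ x y).card = m + m + l := by
  have h1 : (setX φ x).card = m := by
    rw [setX, Finset.card_image_of_injective _ (injX φ x)]
    simp
  have h2 : (setY φ y).card = m := by
    rw [setY, Finset.card_image_of_injective _ (injY φ y)]
    simp
  have h3 : (setF φ).card = l := by
    rw [setF, Finset.card_image_of_injective _ (fun i j h => by simpa using (φ.injective h))]
    simp
  rw [setXY, Finset.card_union_of_disjoint, Finset.card_union_of_disjoint, h1, h2, h3]
  · exact disjoint_XY φ x y
  · exact Finset.disjoint_union_left.2 ⟨disjoint_XF φ x, disjoint_YF φ y⟩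

lemma map_setXY {n m l : ℕ} (φ : Lab m l ↪ Fin n) (σ : Equiv.Perm (Fin n)) (x y : Fin m → Bool) :
    (setXY φ x y).map σ.toEmbedding = setXY (φ.trans σ.toEmbedding) x y := by
  ext v
  simp [setXY, setX, setY, setF, Equiv.eq_symm_apply]

/-- The indicator that the vertices `u` and `v` are joined in `G`. -/
def adj {n : ℕ} (G : Finset (Sym2 (Fin n))) (u v : Fin n) : ℝ := by
  classical exact if s(u, v) ∈ G then 1 else 0

lemma adj_of_mem {n : ℕ} {G : Finset (Sym2 (Fin n))} {u v : Fin n} (h : s(u, v) ∈ G) :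
    adj G u v = 1 := by
  simp [adj, h]

lemma adj_of_notMem {n : ℕ} {G : Finset (Sym2 (Fin n))} {u v : Fin n} (h : s(u, v) ∉ G) :
    adj G u v = 0 := by
  simp [adj, h]

lemma edgesIn_split {n : ℕ} (G : Finset (Sym2 (Fin n))) (A B F : Finset (Fin n))
    (hAB : Disjoint A B) (hAF : Disjoint A F) (hBF : Disjoint B F) :
    (edgesIn G (A ∪ B ∪ F) : ℝ) = edgesIn G (A ∪ F) + (edgesIn G (B ∪ F) - edgesIn G F)
      + ∑ a ∈ A, ∑ b ∈ B, adj G a b := by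
  classical
  have he : ∀ S : Finset (Fin n), (edgesIn G S : ℝ)
      = ∑ e ∈ G, if (∀ v ∈ e, v ∈ S) then (1:ℝ) else 0 := by
    intro S
    rw [Finset.sum_boole]; simp only [edgesIn]
  have ha : ∑ a ∈ A, ∑ b ∈ B, adj G a b
      = ∑ e ∈ G, ∑ a ∈ A, ∑ b ∈ B, if s(a, b) = e then (1:ℝ) else 0 := by
    symm
    rw [Finset.sum_comm]
    refine Finset.sum_congr rfl fun a _ => ?_
    rw [Finset.sum_comm]
    refine Finset.sum_congr rfl fun b _ => ?_
    simp [adj]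
  rw [he, he, he, he, ha, ← Finset.sum_sub_distrib, ← Finset.sum_add_distrib,
    ← Finset.sum_add_distrib]
  refine Finset.sum_congr rfl fun e _ => ?_
  induction e using Sym2.ind with
  | _ u v =>
    have hin : ∑ a ∈ A, ∑ b ∈ B, (if s(a, b) = s(u, v) then (1:ℝ) else 0)
        = (if u ∈ A ∧ v ∈ B then 1 else 0) + (if v ∈ A ∧ u ∈ B then 1 else 0) := by
      have h1 : ∀ a ∈ A, ∀ b ∈ B, (if s(a, b) = s(u, v) then (1:ℝ) else 0)
          = (if a = u then (if b = v then 1 else 0) else 0)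
            + (if a = v then (if b = u then 1 else 0) else 0) := by
        intro a haA b hbB
        have hne : a ≠ b := fun h => Finset.disjoint_left.1 hAB haA (h ▸ hbB)
        simp only [Sym2.eq_iff]
        by_cases h1 : a = u <;> by_cases h2 : b = v <;> by_cases h3 : a = v <;>
          by_cases h4 : b = u <;> simp_all
      rw [Finset.sum_congr rfl fun a ha => Finset.sum_congr rfl fun b hb => h1 a ha b hb]
      simp only [Finset.sum_add_distrib]
      congr 1
      · by_cases h1 : u ∈ A <;> by_cases h2 : v ∈ B <;> simp [h1, h2, Finset.sum_ite_irrel]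
      · by_cases h1 : v ∈ A <;> by_cases h2 : u ∈ B <;> simp [h1, h2, Finset.sum_ite_irrel]
    rw [hin]
    have d1 (w : Fin n) : w ∈ A → w ∉ B := fun h => Finset.disjoint_left.1 hAB h
    have d2 (w : Fin n) : w ∈ A → w ∉ F := fun h => Finset.disjoint_left.1 hAF h
    have d3 (w : Fin n) : w ∈ B → w ∉ F := fun h => Finset.disjoint_left.1 hBF h
    have cases4 (w : Fin n) : (w ∈ A ∧ w ∉ B ∧ w ∉ F) ∨ (w ∉ A ∧ w ∈ B ∧ w ∉ F) ∨
        (w ∉ A ∧ w ∉ B ∧ w ∈ F) ∨ (w ∉ A ∧ w ∉ B ∧ w ∉ F) := by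
      have := d1 w; have := d2 w; have := d3 w
      tauto
    simp only [Sym2.mem_iff, forall_eq_or_imp, forall_eq, Finset.mem_union]
    rcases cases4 u with ⟨a1, a2, a3⟩ | ⟨a1, a2, a3⟩ | ⟨a1, a2, a3⟩ | ⟨a1, a2, a3⟩ <;>
      rcases cases4 v with ⟨b1, b2, b3⟩ | ⟨b1, b2, b3⟩ | ⟨b1, b2, b3⟩ | ⟨b1, b2, b3⟩ <;>
      simp [a1, a2, a3, b1, b2, b3]

/-- The number of edges inside `setXY φ x y` is a function of `x`, plus a function of `y`, plus
the number of edges between the vertices chosen by `x` and those chosen by `y`. -/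
lemma edgesIn_setXY {n m l : ℕ} (G : Finset (Sym2 (Fin n))) (φ : Lab m l ↪ Fin n)
    (x y : Fin m → Bool) :
    (edgesIn G (setXY φ x y) : ℝ) = edgesIn G (setX φ x ∪ setF φ)
      + (edgesIn G (setY φ y ∪ setF φ) - edgesIn G (setF φ))
      + ∑ i, ∑ j, adj G (φ (Sum.inl (i, x i))) (φ (Sum.inr (Sum.inl (j, y j)))) := by
  rw [setXY, edgesIn_split G _ _ _ (disjoint_XY φ x y) (disjoint_XF φ x) (disjoint_YF φ y)]
  congr 1
  rw [setX, Finset.sum_image (injX φ x).injOn]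
  refine Finset.sum_congr rfl fun i _ => ?_
  rw [setY, Finset.sum_image (injY φ y).injOn]

/-! ### Expectations over the random graph -/

/-- Expectation of `F` over the binomial random graph `G_{n,p}`. -/
def EG (n : ℕ) (p : ℝ) (F : Finset (Sym2 (Fin n)) → ℝ) : ℝ :=
  ∑ G ∈ (completeEdges n).powerset,
    p ^ G.card * (1 - p) ^ ((completeEdges n).card - G.card) * F G

lemma EG_mono {n : ℕ} {p : ℝ} (hp0 : 0 ≤ p) (hp1 : p ≤ 1) {F F' : Finset (Sym2 (Fin n)) → ℝ}
    (h : ∀ G, F G ≤ F' G) : EG n p F ≤ EG n p F' := by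
  refine Finset.sum_le_sum fun G _ => ?_
  have : 0 ≤ 1 - p := by linarith
  exact mul_le_mul_of_nonneg_left (h G) (by positivity)

lemma EG_add {n : ℕ} {p : ℝ} (F F' : Finset (Sym2 (Fin n)) → ℝ) :
    EG n p (fun G => F G + F' G) = EG n p F + EG n p F' := by
  simp only [EG, mul_add, Finset.sum_add_distrib]

lemma EG_mul {n : ℕ} {p : ℝ} (c : ℝ) (F : Finset (Sym2 (Fin n)) → ℝ) :
    EG n p (fun G => c * F G) = c * EG n p F := by
  simp only [EG, Finset.mul_sum]
  exact Finset.sum_congr rfl fun G _ => by ring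

lemma EG_sum {n : ℕ} {p : ℝ} {ι : Type*} (s : Finset ι) (F : ι → Finset (Sym2 (Fin n)) → ℝ) :
    EG n p (fun G => ∑ i ∈ s, F i G) = ∑ i ∈ s, EG n p (F i) := by
  simp only [EG, Finset.mul_sum]
  exact Finset.sum_comm

/-- Independence of distinct edges: the expectation of a product of factors, each depending on one
edge only, is the product of the expectations. -/
lemma sum_prod_edges {n : ℕ} {R : Type*} [CommRing R] (p q : R) (hpq : p + q = 1)
    {I : Type*} [Fintype I] (κ : I → Sym2 (Fin n)) (hκ : Function.Injective κ)
    (hκE : ∀ t, κ t ∈ completeEdges n) (f : I → R) [DecidableEq (Sym2 (Fin n))] :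
    ∑ G ∈ (completeEdges n).powerset, p ^ G.card * q ^ ((completeEdges n).card - G.card)
        * ∏ t, (if κ t ∈ G then f t else 1)
      = ∏ t, (p * f t + q) := by
  classical
  set E := completeEdges n
  set f' : Sym2 (Fin n) → R := Function.extend κ f (fun _ => 1) with hf'
  have hf1 : ∀ t, f' (κ t) = f t := fun t => hκ.extend_apply f (fun _ => 1) t
  have hf2 : ∀ e, e ∉ univ.image κ → f' e = 1 := by
    intro e he
    rw [hf', Function.extend_apply' f _ e (by simpa using he)]
  have hprod : ∀ G, ∏ t, (if κ t ∈ G then f t else 1) = ∏ e ∈ G, f' e := by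
    intro G
    have h1 : ∏ e ∈ univ.image κ, (if e ∈ G then f' e else 1)
        = ∏ t, (if κ t ∈ G then f t else 1) := by
      rw [Finset.prod_image hκ.injOn]
      exact Finset.prod_congr rfl fun t _ => by rw [hf1]
    rw [← h1, Finset.prod_ite_mem]
    refine Finset.prod_subset Finset.inter_subset_right fun e heG he => hf2 e fun h => he ?_
    exact Finset.mem_inter.2 ⟨h, heG⟩
  have h2 : ∀ G ∈ E.powerset, p ^ G.card * q ^ (E.card - G.card)
        * ∏ t, (if κ t ∈ G then f t else 1) = (∏ e ∈ G, p * f' e) * ∏ e ∈ E \ G, q := by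
    intro G hG
    rw [hprod, Finset.prod_mul_distrib, Finset.prod_const, Finset.prod_const,
      Finset.card_sdiff_of_subset (Finset.mem_powerset.1 hG)]
    ring
  rw [Finset.sum_congr rfl h2, ← Finset.prod_add]
  have hsub : univ.image κ ⊆ E := by
    intro e he
    obtain ⟨t, -, rfl⟩ := Finset.mem_image.1 he
    exact hκE t
  rw [← Finset.prod_subset hsub (fun e _ he => by rw [hf2 e he, mul_one, hpq]),
    Finset.prod_image hκ.injOn]
  exact Finset.prod_congr rfl fun t _ => by rw [hf1]

lemma EG_one (n : ℕ) (p : ℝ) : EG n p (fun _ => 1) = 1 := by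
  classical
  have := sum_prod_edges (n := n) p (1 - p) (by ring) (I := Empty) (fun t => t.elim)
    (fun t => t.elim) (fun t => t.elim) (fun t => t.elim)
  simpa [EG] using this

/-! ### The linear coefficients of the decoupled form -/

/-- For `t = (b, j, c)`: the edge joining vertex `b` of the `i`-th pair of the first family to
vertex `c` of the `j`-th pair of the second one. -/
def pairEdge {n m l : ℕ} (φ : Lab m l ↪ Fin n) (i : Fin m) (t : Bool × Fin m × Bool) :
    Sym2 (Fin n) :=
  s(φ (Sum.inl (i, t.1)), φ (Sum.inr (Sum.inl t.2)))

lemma pairEdge_injective {n m l : ℕ} (φ : Lab m l ↪ Fin n) :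
    Function.Injective (fun t : Fin m × (Bool × Fin m × Bool) => pairEdge φ t.1 t.2) := by
  rintro ⟨i, b, j⟩ ⟨i', b', j'⟩ h
  simp only [pairEdge, Sym2.eq_iff] at h
  rcases h with ⟨h1, h2⟩ | ⟨h1, -⟩
  · have h1' := φ.injective h1
    have h2' := φ.injective h2
    simp only [Sum.inr.injEq, Sum.inl.injEq, Prod.mk.injEq] at h1' h2'
    simp [h1', h2']
  · exact absurd (φ.injective h1) (by simp)

lemma pairEdge_mem {n m l : ℕ} (φ : Lab m l ↪ Fin n) (i : Fin m) (t : Bool × Fin m × Bool) :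
    pairEdge φ i t ∈ completeEdges n := by
  simp [completeEdges, pairEdge]

/-- The coefficient, `0` or `±1`, of an edge in the linear form `Lc`. -/
def coef {m : ℕ} (y y' : Fin m → Bool) (t : Bool × Fin m × Bool) : ℤ :=
  (if t.1 then 1 else -1) *
    ((if t.2.2 = y t.2.1 then 1 else 0) - (if t.2.2 = y' t.2.1 then 1 else 0))

/-- The change of `e(setXY φ x y) - e(setXY φ x y')` when `x i` is switched from `false` to
`true`. -/
def Lc {n m l : ℕ} (φ : Lab m l ↪ Fin n) (G : Finset (Sym2 (Fin n))) (y y' : Fin m → Bool)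
    (i : Fin m) : ℝ :=
  ∑ t, (coef y y' t : ℝ) * adj G (φ (Sum.inl (i, t.1))) (φ (Sum.inr (Sum.inl t.2)))

/-- The number of coordinates where `y` and `y'` differ. -/
def hd {m : ℕ} (y y' : Fin m → Bool) : ℕ := (univ.filter (fun j => y j ≠ y' j)).card

lemma prod_coef {R : Type*} [CommRing R] {m : ℕ} (y y' : Fin m → Bool) (p q : R) (hpq : p + q = 1)
    (f : ℤ → R) (hf : f 0 = 1) :
    ∏ t, (p * f (coef y y' t) + q) = ((p * f 1 + q) * (p * f (-1) + q)) ^ (2 * hd y y') := by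
  have h1 : ∀ b j, ∏ b', (p * f (coef y y' (b, j, b')) + q)
      = if y j ≠ y' j then (p * f 1 + q) * (p * f (-1) + q) else 1 := by
    intro b j
    cases b <;> rcases hy : y j with _ | _ <;> rcases hy' : y' j with _ | _ <;>
      simp [coef, hy, hy', hf, hpq, mul_comm]
  rw [Fintype.prod_prod_type]
  simp_rw [Fintype.prod_prod_type, h1]
  rw [Finset.prod_const, ← Finset.prod_filter, Finset.prod_const, ← pow_mul]
  simp [hd, mul_comm]

lemma exp_mul_Lc {n m l : ℕ} (φ : Lab m l ↪ Fin n) (G : Finset (Sym2 (Fin n)))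
    (y y' : Fin m → Bool) (i : Fin m) (c : ℝ) [DecidableEq (Sym2 (Fin n))] :
    Real.exp (c * Lc φ G y y' i)
      = ∏ t, (if pairEdge φ i t ∈ G then Real.exp (c * coef y y' t) else 1) := by
  rw [Lc, Finset.mul_sum, Real.exp_sum]
  refine Finset.prod_congr rfl fun t _ => ?_
  split_ifs with h
  · simp [adj_of_mem h]
  · simp [adj_of_notMem h]

lemma cexp_mul_Lc {n m l : ℕ} (φ : Lab m l ↪ Fin n) (G : Finset (Sym2 (Fin n)))
    (y y' : Fin m → Bool) (i : Fin m) (c : ℂ) [DecidableEq (Sym2 (Fin n))] :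
    Complex.exp (c * Lc φ G y y' i)
      = ∏ t, (if pairEdge φ i t ∈ G then Complex.exp (c * coef y y' t) else 1) := by
  rw [Lc, Complex.ofReal_sum, Finset.mul_sum, Complex.exp_sum]
  refine Finset.prod_congr rfl fun t _ => ?_
  split_ifs with h
  · simp [adj_of_mem h]
  · simp [adj_of_notMem h]

/-- A Hoeffding-type bound for the exponential moments of `Lc`, a sum of independent centred
differences. -/
lemma EG_exp_Lc {n m l : ℕ} (φ : Lab m l ↪ Fin n) (p : ℝ) (hp0 : 0 ≤ p) (hp1 : p ≤ 1)
    (y y' : Fin m → Bool) (i : Fin m) (c : ℝ) :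
    EG n p (fun G => Real.exp (c * Lc φ G y y' i)) ≤ Real.exp (c ^ 2 * m) := by
  classical
  have hinj : Function.Injective (pairEdge φ i) := fun t t' h => by
    have := @pairEdge_injective n m l φ (i, t) (i, t') h
    simpa using this
  simp only [EG, exp_mul_Lc]
  rw [sum_prod_edges p (1 - p) (by ring) (pairEdge φ i) hinj (pairEdge_mem φ i),
    prod_coef y y' p (1 - p) (by ring) (fun z => Real.exp (c * z)) (by simp)]
  have hq : 0 ≤ 1 - p := by linarith
  have h1 : (p * Real.exp (c * ((1:ℤ):ℝ)) + (1 - p)) * (p * Real.exp (c * ((-1:ℤ):ℝ)) + (1 - p))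
      ≤ Real.exp (c ^ 2 / 2) := by
    refine le_trans ?_ (Real.cosh_le_exp_half_sq c)
    have hc := Real.one_le_cosh c
    have he : Real.exp c * Real.exp (-c) = 1 := by rw [← Real.exp_add]; simp
    have h2 : (p * Real.exp (c * ((1:ℤ):ℝ)) + (1 - p)) * (p * Real.exp (c * ((-1:ℤ):ℝ)) + (1 - p))
        = 1 + 2 * (p * (1 - p)) * (Real.cosh c - 1) := by
      rw [Real.cosh_eq]
      push_cast
      simp only [mul_one, mul_neg]
      linear_combination p ^ 2 * he
    rw [h2]
    nlinarith [sq_nonneg (2 * p - 1)]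
  calc _ ≤ Real.exp (c ^ 2 / 2) ^ (2 * hd y y') := by
        refine pow_le_pow_left₀ ?_ h1 _
        positivity
    _ = Real.exp (c ^ 2 * hd y y') := by
        rw [← Real.exp_nat_mul]; congr 1; push_cast; ring
    _ ≤ _ := by
        refine Real.exp_le_exp.2 (mul_le_mul_of_nonneg_left ?_ (sq_nonneg c))
        have : hd y y' ≤ m := by
          simpa [hd] using Finset.card_le_univ (univ.filter (fun j => y j ≠ y' j))
        exact_mod_cast this

/-- Since the coefficients `Lc φ G y y' i` are independent as `i` varies, the expectation factorizes
and each factor is a characteristic function. -/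
lemma EG_prod_cos {n m l : ℕ} (φ : Lab m l ↪ Fin n) (p : ℝ) (y y' : Fin m → Bool) (θ : ℝ) :
    EG n p (fun G => ∏ i, (3 + Real.cos (θ * Lc φ G y y' i)) / 4)
      = (3 / 4 + (1 - 2 * (p * (1 - p)) * (1 - Real.cos θ)) ^ (2 * hd y y') / 4) ^ m := by
  classical
  -- `(3 + cos u) / 4` is the characteristic function of a lazy sign
  let v : Fin 3 → ℂ := ![0, Complex.I * θ, -(Complex.I * θ)]
  let w : Fin 3 → ℂ := ![3 / 4, 1 / 8, 1 / 8]
  have hcos : ∀ u : ℝ, (((3 + Real.cos (θ * u)) / 4 : ℝ) : ℂ)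
      = ∑ s, w s * Complex.exp (v s * u) := by
    intro u
    simp only [v, w, Fin.sum_univ_three, Matrix.cons_val]
    push_cast
    rw [Complex.cos]
    simp only [zero_mul, Complex.exp_zero]
    rw [show Complex.I * θ * u = θ * u * Complex.I by ring,
      show -(Complex.I * θ) * u = -(θ * u) * Complex.I by ring]
    ring
  have hZ : ∀ s, ∏ t, ((p:ℂ) * Complex.exp (v s * coef y y' t) + (1 - p))
      = if s = 0 then 1 else
        (1 - 2 * ((p:ℂ) * (1 - p)) * (1 - Complex.cos θ)) ^ (2 * hd y y') := by
    intro s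
    rw [prod_coef y y' (p:ℂ) (1 - p) (by ring) (fun z => Complex.exp (v s * z)) (by simp)]
    have he : Complex.exp (θ * Complex.I) * Complex.exp (-θ * Complex.I) = 1 := by
      rw [← Complex.exp_add]; simp
    fin_cases s
    · simp [v]
    · simp only [v, Complex.cos]
      simp
      congr 1
      rw [show Complex.I * θ = θ * Complex.I by ring]
      simp only [neg_mul] at he
      linear_combination p ^ 2 * he
    · simp only [v, Complex.cos]
      simp
      congr 1
      rw [show Complex.I * θ = θ * Complex.I by ring]
      simp only [neg_mul] at he
      linear_combination p ^ 2 * he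
  have hmain : ((EG n p (fun G => ∏ i, (3 + Real.cos (θ * Lc φ G y y' i)) / 4) : ℝ) : ℂ)
      = ∏ _i : Fin m, ∑ s, w s * ∏ t, ((p:ℂ) * Complex.exp (v s * coef y y' t) + (1 - p)) := by
    have hexp : ∀ G, ((∏ i, (3 + Real.cos (θ * Lc φ G y y' i)) / 4 : ℝ) : ℂ)
        = ∑ s : Fin m → Fin 3, (∏ i, w (s i)) * ∏ t : Fin m × (Bool × Fin m × Bool),
          (if pairEdge φ t.1 t.2 ∈ G then Complex.exp (v (s t.1) * coef y y' t.2) else 1) := by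
      intro G
      rw [Complex.ofReal_prod]
      simp_rw [hcos]
      rw [Finset.prod_univ_sum, Fintype.piFinset_univ]
      refine Finset.sum_congr rfl fun s _ => ?_
      rw [Finset.prod_mul_distrib, Fintype.prod_prod_type]
      congr 1
      exact Finset.prod_congr rfl fun i _ => cexp_mul_Lc φ G y y' i _
    rw [EG, Complex.ofReal_sum]
    simp_rw [Complex.ofReal_mul, hexp, Finset.mul_sum]
    rw [Finset.sum_comm, Finset.prod_univ_sum, Fintype.piFinset_univ]
    refine Finset.sum_congr rfl fun s _ => ?_
    have hK := sum_prod_edges (p:ℂ) (1 - p) (by ring) _ (pairEdge_injective φ)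
      (fun t => pairEdge_mem φ t.1 t.2)
      (fun t => Complex.exp (v (s t.1) * coef y y' t.2))
    rw [Finset.prod_mul_distrib, ← Fintype.prod_prod_type', ← hK, Finset.mul_sum]
    refine Finset.sum_congr rfl fun G _ => ?_
    push_cast
    ring
  have hfin : ((EG n p (fun G => ∏ i, (3 + Real.cos (θ * Lc φ G y y' i)) / 4) : ℝ) : ℂ)
      = (((3 / 4 + (1 - 2 * (p * (1 - p)) * (1 - Real.cos θ)) ^ (2 * hd y y') / 4) ^ m : ℝ) : ℂ) := by
    rw [hmain, Finset.prod_const]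
    simp_rw [hZ]
    simp only [w, Fin.sum_univ_three, Finset.card_univ, Fintype.card_fin]
    push_cast
    congr 1
    simp
    ring
  exact_mod_cast hfin

/-! ### Decoupling the characteristic function -/

lemma Lc_eq {n m l : ℕ} (φ : Lab m l ↪ Fin n) (G : Finset (Sym2 (Fin n))) (y y' : Fin m → Bool)
    (i : Fin m) :
    Lc φ G y y' i
      = (∑ j, (adj G (φ (Sum.inl (i, true))) (φ (Sum.inr (Sum.inl (j, y j))))
          - adj G (φ (Sum.inl (i, true))) (φ (Sum.inr (Sum.inl (j, y' j))))))
        - ∑ j, (adj G (φ (Sum.inl (i, false))) (φ (Sum.inr (Sum.inl (j, y j))))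
          - adj G (φ (Sum.inl (i, false))) (φ (Sum.inr (Sum.inl (j, y' j))))) := by
  rw [Lc, Fintype.sum_prod_type, Fintype.sum_bool, sub_eq_add_neg, ← Finset.sum_neg_distrib,
    Fintype.sum_prod_type, Fintype.sum_prod_type]
  congr 1
  · refine Finset.sum_congr rfl fun j _ => ?_
    rw [Fintype.sum_bool]
    rcases hy : y j with _ | _ <;> rcases hy' : y' j with _ | _ <;>
      simp [coef, hy, hy'] <;> ring
  · refine Finset.sum_congr rfl fun j _ => ?_
    rw [Fintype.sum_bool]
    rcases hy : y j with _ | _ <;> rcases hy' : y' j with _ | _ <;>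
      simp [coef, hy, hy'] <;> ring

lemma norm_cexp_add_cexp (a b : ℝ) :
    ‖Complex.exp (a * Complex.I) + Complex.exp (b * Complex.I)‖ = 2 * |Real.cos ((a - b) / 2)| := by
  have h : Complex.exp (a * Complex.I) + Complex.exp (b * Complex.I)
      = Complex.exp (((a + b) / 2 : ℝ) * Complex.I) * ((2 * Real.cos ((a - b) / 2) : ℝ) : ℂ) := by
    push_cast
    rw [Complex.cos, mul_div_cancel₀ _ (two_ne_zero), mul_add, ← Complex.exp_add,
      ← Complex.exp_add]
    congr 2 <;> ring
  rw [h, norm_mul, Complex.norm_exp_ofReal_mul_I, one_mul, Complex.norm_real, Real.norm_eq_abs,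
    abs_mul, abs_two]

/-- Cauchy–Schwarz in `x` removes the parts `P` and `R` of the phase that depend on one variable
only. -/
lemma norm_sq_sum_sum_le {X Y : Type*} [Fintype X] [Fintype Y] (P : X → ℝ) (R : Y → ℝ)
    (B : X → Y → ℝ) :
    ‖∑ x, ∑ y, Complex.exp ((P x + R y + B x y : ℝ) * Complex.I)‖ ^ 2
      ≤ Fintype.card X * ∑ y, ∑ y', ‖∑ x, Complex.exp ((B x y - B x y' : ℝ) * Complex.I)‖ := by
  have h1 : ‖∑ x, ∑ y, Complex.exp ((P x + R y + B x y : ℝ) * Complex.I)‖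
      ≤ ∑ x, ‖∑ y, Complex.exp ((R y + B x y : ℝ) * Complex.I)‖ := by
    refine (norm_sum_le _ _).trans (Finset.sum_le_sum fun x _ => le_of_eq ?_)
    have : ∑ y, Complex.exp ((P x + R y + B x y : ℝ) * Complex.I)
        = Complex.exp ((P x : ℝ) * Complex.I)
          * ∑ y, Complex.exp ((R y + B x y : ℝ) * Complex.I) := by
      rw [Finset.mul_sum]
      refine Finset.sum_congr rfl fun y _ => ?_
      rw [← Complex.exp_add]
      congr 1
      push_cast
      ring
    rw [this, norm_mul, Complex.norm_exp_ofReal_mul_I, one_mul]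
  have h2 : (∑ x, ‖∑ y, Complex.exp ((R y + B x y : ℝ) * Complex.I)‖) ^ 2
      ≤ Fintype.card X * ∑ x, ‖∑ y, Complex.exp ((R y + B x y : ℝ) * Complex.I)‖ ^ 2 := by
    have := sq_sum_le_card_mul_sum_sq (s := (univ : Finset X))
      (f := fun x => ‖∑ y, Complex.exp ((R y + B x y : ℝ) * Complex.I)‖)
    simpa using this
  have h3 : ((∑ x, ‖∑ y, Complex.exp ((R y + B x y : ℝ) * Complex.I)‖ ^ 2 : ℝ) : ℂ)
      = ∑ y, ∑ y', Complex.exp ((R y - R y' : ℝ) * Complex.I)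
          * ∑ x, Complex.exp ((B x y - B x y' : ℝ) * Complex.I) := by
    have h4 : ∀ x, ((‖∑ y, Complex.exp ((R y + B x y : ℝ) * Complex.I)‖ ^ 2 : ℝ) : ℂ)
        = ∑ y, ∑ y', Complex.exp ((R y - R y' : ℝ) * Complex.I)
            * Complex.exp ((B x y - B x y' : ℝ) * Complex.I) := by
      intro x
      rw [Complex.ofReal_pow, ← Complex.mul_conj', map_sum, Finset.sum_mul_sum]
      refine Finset.sum_congr rfl fun y _ => Finset.sum_congr rfl fun y' _ => ?_
      rw [← Complex.exp_conj, ← Complex.exp_add, ← Complex.exp_add]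
      congr 1
      simp only [map_mul, Complex.conj_ofReal, Complex.conj_I]
      push_cast
      ring
    rw [Complex.ofReal_sum]
    simp_rw [h4, Finset.mul_sum]
    rw [Finset.sum_comm]
    exact Finset.sum_congr rfl fun y _ => Finset.sum_comm
  have h5 : ∑ x, ‖∑ y, Complex.exp ((R y + B x y : ℝ) * Complex.I)‖ ^ 2
      ≤ ∑ y, ∑ y', ‖∑ x, Complex.exp ((B x y - B x y' : ℝ) * Complex.I)‖ := by
    have h6 : ∑ x, ‖∑ y, Complex.exp ((R y + B x y : ℝ) * Complex.I)‖ ^ 2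
        = ‖((∑ x, ‖∑ y, Complex.exp ((R y + B x y : ℝ) * Complex.I)‖ ^ 2 : ℝ) : ℂ)‖ := by
      rw [Complex.norm_real, Real.norm_of_nonneg]
      positivity
    rw [h6, h3]
    refine (norm_sum_le _ _).trans (Finset.sum_le_sum fun y _ => ?_)
    refine (norm_sum_le _ _).trans (Finset.sum_le_sum fun y' _ => ?_)
    rw [norm_mul, Complex.norm_exp_ofReal_mul_I, one_mul]
  calc _ ≤ (∑ x, ‖∑ y, Complex.exp ((R y + B x y : ℝ) * Complex.I)‖) ^ 2 := by gcongr
    _ ≤ _ := h2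
    _ ≤ _ := by gcongr

lemma norm_sq_sum_setXY_le {n m l : ℕ} (φ : Lab m l ↪ Fin n) (G : Finset (Sym2 (Fin n)))
    (θ : ℝ) :
    ‖∑ x, ∑ y, Complex.exp ((θ * edgesIn G (setXY φ x y) : ℝ) * Complex.I)‖ ^ 2
      ≤ (2 ^ m) ^ 2 * ∑ y, ∑ y', ∏ i, |Real.cos (θ * Lc φ G y y' i / 2)| := by
  set a : Fin m → Bool → Fin m → Bool → ℝ := fun i b j b' =>
    adj G (φ (Sum.inl (i, b))) (φ (Sum.inr (Sum.inl (j, b')))) with ha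
  have h := norm_sq_sum_sum_le (X := Fin m → Bool) (Y := Fin m → Bool)
    (fun x => θ * edgesIn G (setX φ x ∪ setF φ))
    (fun y => θ * (edgesIn G (setY φ y ∪ setF φ) - edgesIn G (setF φ)))
    (fun x y => θ * ∑ i, ∑ j, a i (x i) j (y j))
  have h1 : ∀ y y' : Fin m → Bool, ‖∑ x : Fin m → Bool,
      Complex.exp ((θ * ∑ i, ∑ j, a i (x i) j (y j) - θ * ∑ i, ∑ j, a i (x i) j (y' j) : ℝ)
        * Complex.I)‖ = 2 ^ m * ∏ i, |Real.cos (θ * Lc φ G y y' i / 2)| := by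
    intro y y'
    have h2 : ∀ x : Fin m → Bool,
        Complex.exp ((θ * ∑ i, ∑ j, a i (x i) j (y j) - θ * ∑ i, ∑ j, a i (x i) j (y' j) : ℝ)
          * Complex.I)
        = ∏ i, Complex.exp ((θ * ∑ j, (a i (x i) j (y j) - a i (x i) j (y' j)) : ℝ)
          * Complex.I) := by
      intro x
      rw [← Complex.exp_sum, ← Finset.sum_mul, ← Complex.ofReal_sum, ← mul_sub,
        ← Finset.sum_sub_distrib, ← Finset.mul_sum]
      simp_rw [Finset.sum_sub_distrib]
    simp_rw [h2]
    have h3 := Finset.prod_univ_sum (fun _ : Fin m => (univ : Finset Bool))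
      (fun i b => Complex.exp ((θ * ∑ j, (a i b j (y j) - a i b j (y' j)) : ℝ) * Complex.I))
    rw [Fintype.piFinset_univ] at h3
    rw [← h3, norm_prod]
    simp_rw [Fintype.sum_bool, norm_cexp_add_cexp]
    rw [Finset.prod_mul_distrib, Finset.prod_const, Finset.card_univ, Fintype.card_fin]
    congr 1
    refine Finset.prod_congr rfl fun i _ => ?_
    rw [Lc_eq, ← mul_sub]
  have h4 : ∀ x y, θ * (edgesIn G (setXY φ x y) : ℝ)
      = θ * edgesIn G (setX φ x ∪ setF φ)
        + θ * (edgesIn G (setY φ y ∪ setF φ) - edgesIn G (setF φ))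
        + θ * ∑ i, ∑ j, a i (x i) j (y j) := by
    intro x y
    rw [edgesIn_setXY]
    ring
  simp_rw [h4]
  refine h.trans (le_of_eq ?_)
  simp_rw [h1, ← Finset.mul_sum]
  simp only [Fintype.card_pi, Fintype.card_bool, Finset.prod_const, Finset.card_univ,
    Fintype.card_fin]
  push_cast
  ring

/-- The characteristic function of `e(S)` for a uniformly random `k`-set `S`. -/
def charE {n : ℕ} (k : ℕ) (G : Finset (Sym2 (Fin n))) (θ : ℝ) : ℂ :=
  (∑ S ∈ kSets n k, Complex.exp ((θ * edgesIn G S : ℝ) * Complex.I)) / (kSets n k).card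

/-- The auxiliary sample space: a relabelling of the vertices and two choice functions. -/
abbrev Aux (n m : ℕ) : Type := Equiv.Perm (Fin n) × (Fin m → Bool) × (Fin m → Bool)

lemma card_Aux (n m : ℕ) : (Fintype.card (Aux n m) : ℝ)
    = Fintype.card (Equiv.Perm (Fin n)) * (2 ^ m) ^ 2 := by
  simp only [Fintype.card_prod, Fintype.card_pi, Fintype.card_bool, Finset.prod_const,
    Finset.card_univ, Fintype.card_fin]
  push_cast
  ring

/-- The coefficient `Lc` at a point of the auxiliary sample space. -/
def LA {n m l : ℕ} (φ : Lab m l ↪ Fin n) (G : Finset (Sym2 (Fin n))) (ω : Aux n m) (i : Fin m) : ℝ :=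
  Lc (φ.trans ω.1.toEmbedding) G ω.2.1 ω.2.2 i

/-- The decoupled bound: once `y` and `y'` are fixed, the sum over `x` factorizes into cosines of
the linear coefficients. -/
lemma norm_sq_charE_le {n m l k : ℕ} (φ : Lab m l ↪ Fin n) (hk : m + m + l = k)
    (G : Finset (Sym2 (Fin n))) (θ : ℝ) :
    ‖charE k G θ‖ ^ 2
      ≤ (∑ ω : Aux n m, ∏ i, |Real.cos (θ * LA φ G ω i / 2)|) / Fintype.card (Aux n m) := by
  set f : Finset (Fin n) → ℂ := fun S => Complex.exp ((θ * edgesIn G S : ℝ) * Complex.I) with hf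
  set N : ℝ := (Fintype.card (Equiv.Perm (Fin n)) : ℝ) with hN
  set Z : Equiv.Perm (Fin n) → ℂ := fun σ =>
    ∑ x, ∑ y, f (setXY (φ.trans σ.toEmbedding) x y) with hZ
  have hN0 : 0 < N := by
    rw [hN]; exact_mod_cast Fintype.card_pos
  have hk0 : (0:ℝ) < (kSets n k).card := by
    have : setXY φ (fun _ => true) (fun _ => true) ∈ kSets n k := by
      simp [kSets, mem_powersetCard, card_setXY, hk]
    exact_mod_cast Finset.card_pos.2 ⟨_, this⟩
  have h1 : ((kSets n k).card : ℂ) * ∑ σ, Z σ = (N * (2 ^ m) ^ 2 : ℝ) * ∑ S ∈ kSets n k, f S := by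
    have h2 : ∑ σ, Z σ = ∑ x, ∑ y, ∑ σ : Equiv.Perm (Fin n),
        f ((setXY φ x y).map σ.toEmbedding) := by
      rw [hZ]
      simp_rw [map_setXY]
      rw [Finset.sum_comm]
      exact Finset.sum_congr rfl fun x _ => Finset.sum_comm
    rw [h2, Finset.mul_sum]
    simp_rw [Finset.mul_sum (s := (univ : Finset (Fin m → Bool)))]
    simp_rw [sum_kSets_eq_sum_perm f _ ((card_setXY φ _ _).trans hk)]
    simp only [Finset.sum_const, Finset.card_univ, Fintype.card_pi, Fintype.card_bool,
      Finset.prod_const, Fintype.card_fin, hN, nsmul_eq_mul]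
    push_cast
    ring
  have h3 : charE k G θ = (∑ σ, Z σ) / (N * (2 ^ m) ^ 2 : ℝ) := by
    rw [charE, div_eq_div_iff (by exact_mod_cast hk0.ne')
      (by exact_mod_cast (by positivity : N * (2 ^ m) ^ 2 ≠ 0))]
    linear_combination -h1
  have h4 : ‖∑ σ, Z σ‖ ^ 2 ≤ N * ∑ σ, ‖Z σ‖ ^ 2 := by
    have h5 : ‖∑ σ, Z σ‖ ≤ ∑ σ, ‖Z σ‖ := norm_sum_le _ _
    have h6 := sq_sum_le_card_mul_sum_sq (s := (univ : Finset (Equiv.Perm (Fin n))))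
      (f := fun σ => ‖Z σ‖)
    calc _ ≤ (∑ σ, ‖Z σ‖) ^ 2 := by gcongr
      _ ≤ _ := by simpa [hN] using h6
  have h7 : ∑ σ, ‖Z σ‖ ^ 2
      ≤ (2 ^ m) ^ 2 * ∑ ω : Aux n m, ∏ i, |Real.cos (θ * LA φ G ω i / 2)| := by
    rw [Fintype.sum_prod_type, Finset.mul_sum]
    refine Finset.sum_le_sum fun σ _ => ?_
    rw [Fintype.sum_prod_type]
    exact norm_sq_sum_setXY_le (φ.trans σ.toEmbedding) G θ
  rw [h3, norm_div, div_pow, Complex.norm_real, Real.norm_of_nonneg (by positivity), card_Aux,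
    ← hN]
  rw [div_le_div_iff₀ (by positivity) (by positivity)]
  calc _ ≤ (N * ((2 ^ m) ^ 2 * ∑ ω : Aux n m, ∏ i, |Real.cos (θ * LA φ G ω i / 2)|))
        * (N * (2 ^ m) ^ 2) := by
        gcongr
        exact h4.trans (mul_le_mul_of_nonneg_left h7 hN0.le)
    _ = _ := by ring

/-! ### From the characteristic function to interval probabilities -/

lemma abs_cos_le_exp {u : ℝ} (hu : |u| ≤ 1) : |Real.cos u| ≤ Real.exp (-(u ^ 2 / 8)) := by
  have hpi := Real.pi_gt_three
  have hpi4 := Real.pi_le_four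
  have h0 : 0 ≤ Real.cos u :=
    Real.cos_nonneg_of_neg_pi_div_two_le_of_le (by linarith [(abs_le.1 hu).1])
      (by linarith [(abs_le.1 hu).2])
  rw [abs_of_nonneg h0]
  have h1 := Real.cos_le_one_sub_mul_cos_sq (x := u) (by linarith)
  have h2 : (1:ℝ) / 8 ≤ 2 / Real.pi ^ 2 := by
    rw [div_le_div_iff₀ (by norm_num) (by positivity)]
    nlinarith
  have h3 := Real.add_one_le_exp (-(u ^ 2 / 8))
  nlinarith [sq_nonneg u]

/-- The linear coefficients at `ω` are neither too large individually nor too small on average. -/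
def Good {n m l : ℕ} (c : ℝ) (φ : Lab m l ↪ Fin n) (G : Finset (Sym2 (Fin n))) (ω : Aux n m) :
    Prop :=
  (∀ i, |LA φ G ω i| ≤ (n:ℝ) ^ ((3:ℝ) / 4)) ∧ c * (n:ℝ) ^ 2 ≤ ∑ i, LA φ G ω i ^ 2

/-- The indicator of the failure of `Good`. -/
def badInd {n m l : ℕ} (c : ℝ) (φ : Lab m l ↪ Fin n) (G : Finset (Sym2 (Fin n))) (ω : Aux n m) :
    ℝ := by
  classical exact if Good c φ G ω then 0 else 1

/-- The proportion of the auxiliary sample space where `Good` fails. -/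
def badFrac {n m l : ℕ} (c : ℝ) (φ : Lab m l ↪ Fin n) (G : Finset (Sym2 (Fin n))) : ℝ :=
  (∑ ω, badInd c φ G ω) / Fintype.card (Aux n m)

lemma badInd_nonneg {n m l : ℕ} (c : ℝ) (φ : Lab m l ↪ Fin n) (G : Finset (Sym2 (Fin n)))
    (ω : Aux n m) : 0 ≤ badInd c φ G ω := by
  unfold badInd
  split_ifs <;> norm_num

lemma badFrac_nonneg {n m l : ℕ} (c : ℝ) (φ : Lab m l ↪ Fin n) (G : Finset (Sym2 (Fin n))) :
    0 ≤ badFrac c φ G :=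
  div_nonneg (Finset.sum_nonneg fun ω _ => badInd_nonneg c φ G ω) (Nat.cast_nonneg _)

lemma prod_cos_le {n m l : ℕ} (c : ℝ) (φ : Lab m l ↪ Fin n) (G : Finset (Sym2 (Fin n)))
    (ω : Aux n m) (θ : ℝ) (hθ : |θ| * (n:ℝ) ^ ((3:ℝ) / 4) ≤ 1) :
    ∏ i, |Real.cos (θ * LA φ G ω i / 2)|
      ≤ badInd c φ G ω + Real.exp (-(c / 32 * θ ^ 2 * n ^ 2)) := by
  by_cases hg : Good c φ G ω
  · have hb : badInd c φ G ω = 0 := by simp [badInd, hg]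
    rw [hb, zero_add]
    calc ∏ i, |Real.cos (θ * LA φ G ω i / 2)|
        ≤ ∏ i, Real.exp (-((θ * LA φ G ω i / 2) ^ 2 / 8)) := by
          refine Finset.prod_le_prod (fun i _ => abs_nonneg _) fun i _ => abs_cos_le_exp ?_
          rw [abs_div, abs_mul, abs_two]
          have : |θ| * |LA φ G ω i| ≤ |θ| * (n:ℝ) ^ ((3:ℝ) / 4) :=
            mul_le_mul_of_nonneg_left (hg.1 i) (abs_nonneg _)
          linarith
      _ = Real.exp (-(θ ^ 2 / 32 * ∑ i, LA φ G ω i ^ 2)) := by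
          rw [← Real.exp_sum, Finset.mul_sum, ← Finset.sum_neg_distrib]
          congr 1
          exact Finset.sum_congr rfl fun i _ => by ring
      _ ≤ _ := by
          refine Real.exp_le_exp.2 (neg_le_neg ?_)
          have := mul_le_mul_of_nonneg_left hg.2 (by positivity : 0 ≤ θ ^ 2 / 32)
          linarith
  · have hb : badInd c φ G ω = 1 := by simp [badInd, hg]
    rw [hb]
    have h1 : ∏ i, |Real.cos (θ * LA φ G ω i / 2)| ≤ 1 :=
      Finset.prod_le_one (fun i _ => abs_nonneg _) fun i _ => Real.abs_cos_le_one _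
    have := Real.exp_pos (-(c / 32 * θ ^ 2 * n ^ 2))
    linarith

/-- Gaussian decay of the characteristic function of `e(S)` for frequencies up to `n ^ (-3/4)`. -/
lemma norm_charE_le {n m l k : ℕ} (c : ℝ) (φ : Lab m l ↪ Fin n) (hk : m + m + l = k)
    (G : Finset (Sym2 (Fin n))) (θ : ℝ) (hθ : |θ| * (n:ℝ) ^ ((3:ℝ) / 4) ≤ 1) :
    ‖charE k G θ‖ ≤ √(badFrac c φ G) + Real.exp (-(c / 64 * θ ^ 2 * n ^ 2)) := by
  have hA : (0:ℝ) < Fintype.card (Aux n m) := by exact_mod_cast Fintype.card_pos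
  have h1 : ‖charE k G θ‖ ^ 2 ≤ badFrac c φ G + Real.exp (-(c / 32 * θ ^ 2 * n ^ 2)) := by
    refine (norm_sq_charE_le φ hk G θ).trans ?_
    rw [div_le_iff₀ hA, badFrac, add_mul, div_mul_cancel₀ _ hA.ne']
    refine (Finset.sum_le_sum fun ω _ => prod_cos_le c φ G ω θ hθ).trans (le_of_eq ?_)
    rw [Finset.sum_add_distrib, Finset.sum_const, Finset.card_univ, nsmul_eq_mul, mul_comm]
  have h2 : Real.exp (-(c / 32 * θ ^ 2 * n ^ 2)) = Real.exp (-(c / 64 * θ ^ 2 * n ^ 2)) ^ 2 := by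
    rw [← Real.exp_nat_mul]
    congr 1
    push_cast
    ring
  refine abs_le_of_sq_le_sq' ?_ (by positivity) |>.2
  rw [add_sq, Real.sq_sqrt (badFrac_nonneg c φ G), ← h2]
  have : 0 ≤ 2 * √(badFrac c φ G) * Real.exp (-(c / 64 * θ ^ 2 * n ^ 2)) := by positivity
  linarith

/-- The Fejér kernel is nonnegative. -/
lemma fejer_nonneg (x : ℝ) : 0 ≤ ∫ t in (0:ℝ)..1, (1 - t) * Real.cos (t * x) := by
  by_cases hx : x = 0
  · subst hx
    refine intervalIntegral.integral_nonneg (by norm_num) fun t ht => ?_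
    simp only [mul_zero, Real.cos_zero, mul_one]
    linarith [ht.2]
  · have hd : ∀ t ∈ Set.uIcc (0:ℝ) 1,
        HasDerivAt (fun t => (1 - t) * Real.sin (t * x) / x - Real.cos (t * x) / x ^ 2)
          ((1 - t) * Real.cos (t * x)) t := by
      intro t _
      have hl : HasDerivAt (fun t : ℝ => t * x) x t := by
        simpa using (hasDerivAt_id t).mul_const x
      have h1 := (((hasDerivAt_id t).const_sub 1).mul hl.sin).div_const x
      have h2 := hl.cos.div_const (x ^ 2)
      refine (h1.sub h2).congr_deriv ?_
      simp only [id]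
      field_simp
      ring
    rw [intervalIntegral.integral_eq_sub_of_hasDerivAt hd
      (Continuous.intervalIntegrable (by fun_prop) _ _)]
    have h3 := Real.cos_le_one x
    simp only [sub_self, zero_mul, zero_div, one_mul, Real.sin_zero, Real.cos_zero, mul_zero,
      zero_sub]
    rw [neg_sub_neg, ← sub_div]
    exact div_nonneg (by linarith) (sq_nonneg x)

lemma fejer_ge {x : ℝ} (h0 : 0 ≤ x) (h1 : x ≤ 1) :
    1 / 4 ≤ ∫ t in (0:ℝ)..1, (1 - t) * Real.cos (t * x) := by
  have h2 : ∫ t in (0:ℝ)..1, (1 - t) * (1 / 2 : ℝ) = 1 / 4 := by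
    rw [intervalIntegral.integral_mul_const, intervalIntegral.integral_sub (by simp) (by simp)]
    simp
    norm_num
  rw [← h2]
  refine intervalIntegral.integral_mono_on (by norm_num)
    (Continuous.intervalIntegrable (by fun_prop) _ _)
    (Continuous.intervalIntegrable (by fun_prop) _ _) fun t ht => ?_
  refine mul_le_mul_of_nonneg_left ?_ (by linarith [ht.2])
  have h3 := Real.one_sub_sq_div_two_le_cos (x := t * x)
  have h4 : 0 ≤ t * x := mul_nonneg ht.1 h0
  have h5 : t * x ≤ 1 := mul_le_one₀ ht.2 h0 h1
  nlinarith

lemma continuous_charE {n : ℕ} (k : ℕ) (G : Finset (Sym2 (Fin n))) : Continuous (charE k G) := by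
  unfold charE
  fun_prop

/-- A form of Esseen's inequality, obtained by dominating the indicator of `[z, z + r]` by a
multiple of the Fejér kernel. -/
lemma Pru_le_integral {n : ℕ} (k : ℕ) (G : Finset (Sym2 (Fin n))) (z r : ℝ) (hr : 0 < r) :
    Pru (kSets n k) (fun S => (edgesIn G S : ℝ) ∈ Set.Icc z (z + r))
      ≤ 4 * ∫ t in (0:ℝ)..1, ‖charE k G (t / r)‖ := by
  classical
  have hre : ∀ t, (∑ S ∈ kSets n k, (1 - t) * Real.cos (t * ((edgesIn G S - z) / r)))
        / (kSets n k).card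
      = (1 - t) * (Complex.exp ((-(t / r * z) : ℝ) * Complex.I) * charE k G (t / r)).re := by
    intro t
    rw [charE, ← mul_div_assoc, Finset.mul_sum, ← Finset.mul_sum, mul_div_assoc]
    congr 1
    rw [Complex.div_natCast_re, Complex.re_sum]
    congr 1
    refine Finset.sum_congr rfl fun S _ => ?_
    rw [← Complex.exp_add, ← add_mul, ← Complex.ofReal_add, Complex.exp_ofReal_mul_I_re]
    congr 1
    ring
  have h1 : Pru (kSets n k) (fun S => (edgesIn G S : ℝ) ∈ Set.Icc z (z + r))
      ≤ 4 * ((∑ S ∈ kSets n k, ∫ t in (0:ℝ)..1, (1 - t) * Real.cos (t * ((edgesIn G S - z) / r)))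
        / (kSets n k).card) := by
    rw [Pru, ← mul_div_assoc]
    refine div_le_div_of_nonneg_right ?_ (Nat.cast_nonneg _)
    rw [Finset.mul_sum, Finset.card_filter]
    push_cast
    refine Finset.sum_le_sum fun S _ => ?_
    split_ifs with hS
    · have := fejer_ge (x := ((edgesIn G S : ℝ) - z) / r)
        (div_nonneg (by linarith [hS.1]) hr.le) ((div_le_one hr).2 (by linarith [hS.2]))
      linarith
    · have := fejer_nonneg (((edgesIn G S : ℝ) - z) / r)
      linarith
  refine h1.trans (mul_le_mul_of_nonneg_left ?_ (by norm_num))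
  rw [← intervalIntegral.integral_finsetSum
    (fun S _ => Continuous.intervalIntegrable (by fun_prop) _ _),
    ← intervalIntegral.integral_div]
  have hc := continuous_charE k G
  refine intervalIntegral.integral_mono_on (by norm_num)
    (Continuous.intervalIntegrable (by fun_prop) _ _)
    (Continuous.intervalIntegrable (by fun_prop) _ _) fun t ht => ?_
  rw [hre]
  have h2 := Complex.re_le_norm
    (Complex.exp ((-(t / r * z) : ℝ) * Complex.I) * charE k G (t / r))
  rw [norm_mul, Complex.norm_exp_ofReal_mul_I, one_mul] at h2
  have h3 : 0 ≤ ‖charE k G (t / r)‖ := norm_nonneg _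
  calc _ ≤ (1 - t) * ‖charE k G (t / r)‖ :=
        mul_le_mul_of_nonneg_left h2 (by linarith [ht.2])
    _ ≤ _ := by nlinarith [ht.1, ht.2]

lemma Pru_le_of_badFrac {n m l k : ℕ} (c : ℝ) (hc : 0 < c) (φ : Lab m l ↪ Fin n)
    (hk : m + m + l = k) (G : Finset (Sym2 (Fin n))) (z r : ℝ) (hn : 0 < n)
    (hr : (n:ℝ) ^ ((3:ℝ) / 4) ≤ r) :
    Pru (kSets n k) (fun S => (edgesIn G S : ℝ) ∈ Set.Icc z (z + r))
      ≤ 4 * (√(badFrac c φ G) + √(64 * Real.pi / c) * (r / n)) := by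
  have hn0 : (0:ℝ) < n := by exact_mod_cast hn
  have hr0 : 0 < r := lt_of_lt_of_le (by positivity) hr
  refine (Pru_le_integral k G z r hr0).trans (mul_le_mul_of_nonneg_left ?_ (by norm_num))
  set b : ℝ := c / 64 * (n / r) ^ 2 with hb
  have hb0 : 0 < b := by positivity
  have hcc := continuous_charE k G
  have h1 : ∫ t in (0:ℝ)..1, ‖charE k G (t / r)‖
      ≤ ∫ t in (0:ℝ)..1, (√(badFrac c φ G) + Real.exp (-b * t ^ 2)) := by
    refine intervalIntegral.integral_mono_on (by norm_num)
      (Continuous.intervalIntegrable (by fun_prop) _ _)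
      (Continuous.intervalIntegrable (by fun_prop) _ _) fun t ht => ?_
    have h2 := norm_charE_le c φ hk G (t / r) (by
      rw [abs_of_nonneg (div_nonneg ht.1 hr0.le), div_mul_eq_mul_div, div_le_one hr0]
      calc t * (n:ℝ) ^ ((3:ℝ) / 4) ≤ 1 * (n:ℝ) ^ ((3:ℝ) / 4) :=
            mul_le_mul_of_nonneg_right ht.2 (by positivity)
        _ ≤ r := by rwa [one_mul])
    refine h2.trans (le_of_eq ?_)
    congr 2
    rw [hb]
    ring
  have h3 : ∫ t in (0:ℝ)..1, Real.exp (-b * t ^ 2) ≤ √(Real.pi / b) := by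
    rw [← integral_gaussian b, intervalIntegral.integral_of_le (by norm_num)]
    exact setIntegral_le_integral (integrable_exp_neg_mul_sq hb0)
      (Filter.Eventually.of_forall fun t => (Real.exp_pos _).le)
  have h4 : √(Real.pi / b) = √(64 * Real.pi / c) * (r / n) := by
    have : Real.pi / b = 64 * Real.pi / c * (r / n) ^ 2 := by
      rw [hb]
      field_simp
    rw [this, Real.sqrt_mul (by positivity), Real.sqrt_sq (by positivity)]
  refine h1.trans ?_
  rw [intervalIntegral.integral_add (by simp) (Continuous.intervalIntegrable (by fun_prop) _ _)]
  rw [← h4]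
  simpa using h3

/-! ### The bad event is exponentially unlikely -/

lemma exp_le_lazy_cos (u : ℝ) : Real.exp (-(u ^ 2 / 4)) ≤ (3 + Real.cos u) / 4 := by
  have h1 := Real.one_sub_sq_div_two_le_cos (x := u)
  have h2 := Real.neg_one_le_cos u
  have h3 : Real.exp (-(u ^ 2 / 4)) ≤ 1 / (1 + u ^ 2 / 4) := by
    rw [Real.exp_neg, one_div]
    refine inv_anti₀ (by positivity) ?_
    linarith [Real.add_one_le_exp (u ^ 2 / 4)]
  refine h3.trans ?_
  rw [div_le_iff₀ (by positivity)]
  by_cases h : u ^ 2 ≤ 4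
  · nlinarith [mul_nonneg (sq_nonneg u) (sub_nonneg.2 h)]
  · push Not at h
    nlinarith

/-- A Chernoff-type bound: the failure of `Good` is detected by exponential functionals of the
coefficients. -/
lemma badInd_le {n m l : ℕ} (c : ℝ) (φ : Lab m l ↪ Fin n) (G : Finset (Sym2 (Fin n)))
    (ω : Aux n m) (θ : ℝ) (hθ0 : 0 < θ) (hθ : θ ^ 2 * n = 1) :
    badInd c φ G ω ≤ Real.exp (c * n / 4) * ∏ i, (3 + Real.cos (θ * LA φ G ω i)) / 4
      + ∑ i, Real.exp (-(θ * (n:ℝ) ^ ((3:ℝ) / 4)))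
        * (Real.exp (θ * LA φ G ω i) + Real.exp (-θ * LA φ G ω i)) := by
  have hp : ∀ i, 0 ≤ (3 + Real.cos (θ * LA φ G ω i)) / 4 := fun i => by
    linarith [Real.neg_one_le_cos (θ * LA φ G ω i)]
  have hA : 0 ≤ Real.exp (c * n / 4) * ∏ i, (3 + Real.cos (θ * LA φ G ω i)) / 4 :=
    mul_nonneg (Real.exp_pos _).le (Finset.prod_nonneg fun i _ => hp i)
  have hB : ∀ i, 0 ≤ Real.exp (-(θ * (n:ℝ) ^ ((3:ℝ) / 4)))
        * (Real.exp (θ * LA φ G ω i) + Real.exp (-θ * LA φ G ω i)) := fun i => by positivity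
  have hBs := Finset.sum_nonneg fun i (_ : i ∈ (univ : Finset (Fin m))) => hB i
  by_cases hg : Good c φ G ω
  · have hb : badInd c φ G ω = 0 := by simp [badInd, hg]
    rw [hb]
    exact add_nonneg hA hBs
  · have hb : badInd c φ G ω = 1 := by simp [badInd, hg]
    rw [hb]
    rw [Good, not_and_or] at hg
    rcases hg with hg | hg
    · push Not at hg
      obtain ⟨i, hi⟩ := hg
      have h1 : 1 ≤ Real.exp (-(θ * (n:ℝ) ^ ((3:ℝ) / 4)))
        * (Real.exp (θ * LA φ G ω i) + Real.exp (-θ * LA φ G ω i)) := by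
        rw [mul_add, ← Real.exp_add, ← Real.exp_add]
        rcases lt_abs.1 hi with h | h
        · have h2 := mul_lt_mul_of_pos_left h hθ0
          have h3 := Real.one_le_exp (x := -(θ * (n:ℝ) ^ ((3:ℝ) / 4)) + θ * LA φ G ω i)
            (by linarith)
          have := Real.exp_pos (-(θ * (n:ℝ) ^ ((3:ℝ) / 4)) + -θ * LA φ G ω i)
          linarith
        · have h2 := mul_lt_mul_of_pos_left h hθ0
          have h3 := Real.one_le_exp (x := -(θ * (n:ℝ) ^ ((3:ℝ) / 4)) + -θ * LA φ G ω i)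
            (by linarith)
          have := Real.exp_pos (-(θ * (n:ℝ) ^ ((3:ℝ) / 4)) + θ * LA φ G ω i)
          linarith
      have h4 := Finset.single_le_sum (fun i (_ : i ∈ (univ : Finset (Fin m))) => hB i)
        (Finset.mem_univ i)
      linarith
    · push Not at hg
      have h1 : Real.exp (-(c * n / 4)) ≤ ∏ i, (3 + Real.cos (θ * LA φ G ω i)) / 4 := by
        calc Real.exp (-(c * n / 4)) ≤ Real.exp (-(θ ^ 2 / 4 * ∑ i, LA φ G ω i ^ 2)) := by
              refine Real.exp_le_exp.2 (neg_le_neg ?_)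
              have h2 := mul_le_mul_of_nonneg_left hg.le (by positivity : 0 ≤ θ ^ 2 / 4)
              have h3 : θ ^ 2 / 4 * (c * (n:ℝ) ^ 2) = c * n / 4 := by
                linear_combination c * n / 4 * hθ
              linarith
          _ = ∏ i, Real.exp (-((θ * LA φ G ω i) ^ 2 / 4)) := by
              rw [← Real.exp_sum, Finset.mul_sum, ← Finset.sum_neg_distrib]
              congr 1
              exact Finset.sum_congr rfl fun i _ => by ring
          _ ≤ _ := Finset.prod_le_prod (fun i _ => (Real.exp_pos _).le)
              fun i _ => exp_le_lazy_cos _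
      have h2 : 1 = Real.exp (c * n / 4) * Real.exp (-(c * n / 4)) := by
        rw [← Real.exp_add]; simp
      have h3 := mul_le_mul_of_nonneg_left h1 (Real.exp_pos (c * n / 4)).le
      linarith

/-- The constant `(3 + exp (-δ³/32)) / 4 < 1`, a bound for the expectation of one factor of the
product of lazy cosines. -/
def kap (δ : ℝ) : ℝ := (3 + Real.exp (-(δ ^ 3 / 32))) / 4

lemma kap_lt_one {δ : ℝ} (hδ : 0 < δ) : kap δ < 1 := by
  have : Real.exp (-(δ ^ 3 / 32)) < 1 := by
    have h : 0 < δ ^ 3 := by positivity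
    rw [← Real.exp_zero]
    exact Real.exp_lt_exp.2 (by linarith)
  rw [kap]
  linarith

/-- With `θ = n ^ (-1/2)`, each factor of `EG_prod_cos` is bounded away from `1` once `y` and `y'`
differ in at least a quarter of the coordinates. -/
lemma factor_le {δ p θ : ℝ} {n m d : ℕ} (hδ : 0 < δ) (hp : δ ≤ p) (hp' : p ≤ 1 - δ)
    (hn : 0 < n) (hm : δ * n ≤ 4 * m) (hd : m ≤ 4 * d) (hθ0 : 0 < θ) (hθ : θ ^ 2 * n = 1) :
    3 / 4 + (1 - 2 * (p * (1 - p)) * (1 - Real.cos θ)) ^ (2 * d) / 4 ≤ kap δ := by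
  have hn1 : (1:ℝ) ≤ n := by exact_mod_cast hn
  have hθ2 : θ ^ 2 ≤ 1 := by nlinarith [sq_nonneg θ]
  have hθ1 : θ ≤ 1 := by nlinarith
  have hpq : δ ^ 2 ≤ p * (1 - p) := by nlinarith
  have hpq' : p * (1 - p) ≤ 1 / 4 := by nlinarith [sq_nonneg (2 * p - 1)]
  have hcos : θ ^ 2 / 8 ≤ 1 - Real.cos θ := by
    have hpi := Real.pi_gt_three
    have hpi4 := Real.pi_le_four
    have h1 := Real.cos_le_one_sub_mul_cos_sq (x := θ) (by rw [abs_of_pos hθ0]; linarith)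
    have h2 : (1:ℝ) / 8 ≤ 2 / Real.pi ^ 2 := by
      rw [div_le_div_iff₀ (by norm_num) (by positivity)]
      nlinarith
    nlinarith [sq_nonneg θ]
  have hcos2 : 1 - Real.cos θ ≤ 2 := by linarith [Real.neg_one_le_cos θ]
  have hρ0 : 0 ≤ 1 - 2 * (p * (1 - p)) * (1 - Real.cos θ) := by
    nlinarith [mul_nonneg (sub_nonneg.2 hpq') (by linarith [sq_nonneg θ] : 0 ≤ 1 - Real.cos θ)]
  have hρ1 : 1 - 2 * (p * (1 - p)) * (1 - Real.cos θ) ≤ Real.exp (-(δ ^ 2 * θ ^ 2 / 4)) := by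
    have h1 := Real.add_one_le_exp (-(δ ^ 2 * θ ^ 2 / 4))
    have h2 : δ ^ 2 * (θ ^ 2 / 8) ≤ p * (1 - p) * (1 - Real.cos θ) :=
      mul_le_mul hpq hcos (by positivity) (le_trans (sq_nonneg δ) hpq)
    linarith
  have h3 : (1 - 2 * (p * (1 - p)) * (1 - Real.cos θ)) ^ (2 * d) ≤ Real.exp (-(δ ^ 3 / 32)) := by
    calc _ ≤ Real.exp (-(δ ^ 2 * θ ^ 2 / 4)) ^ (2 * d) := pow_le_pow_left₀ hρ0 hρ1 _
      _ = Real.exp (-(δ ^ 2 * θ ^ 2 * d / 2)) := by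
          rw [← Real.exp_nat_mul]; congr 1; push_cast; ring
      _ ≤ _ := by
          refine Real.exp_le_exp.2 (neg_le_neg ?_)
          have h4 : δ * n ≤ 16 * d := by
            have : (m:ℝ) ≤ 4 * d := by exact_mod_cast hd
            linarith
          have h5 := mul_le_mul_of_nonneg_left h4 (by positivity : 0 ≤ δ ^ 2 * θ ^ 2 / 32)
          have h6 : δ ^ 2 * θ ^ 2 / 32 * (δ * n) = δ ^ 3 / 32 := by
            linear_combination δ ^ 3 / 32 * hθ
          linarith
  rw [kap]
  linarith

lemma sum_pow_hd (m : ℕ) (β : ℝ) :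
    ∑ y : Fin m → Bool, ∑ y' : Fin m → Bool, β ^ hd y y' = (2 + 2 * β) ^ m := by
  have h1 : ∀ y y' : Fin m → Bool, β ^ hd y y' = ∏ j, (if y j ≠ y' j then β else 1) := by
    intro y y'
    rw [← Finset.prod_filter, Finset.prod_const, hd]
  simp_rw [h1]
  have h2 : ∀ y : Fin m → Bool, ∑ y' : Fin m → Bool, ∏ j, (if y j ≠ y' j then β else 1)
      = ∏ j : Fin m, (1 + β) := by
    intro y
    have h3 := Finset.prod_univ_sum (fun _ : Fin m => (univ : Finset Bool))
      (fun j b => if y j ≠ b then β else 1)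
    rw [Fintype.piFinset_univ] at h3
    rw [← h3]
    refine Finset.prod_congr rfl fun j _ => ?_
    cases y j <;> simp [add_comm]
  simp_rw [h2]
  simp only [Finset.prod_const, Finset.sum_const, Finset.card_univ, Fintype.card_fin,
    Fintype.card_pi, Fintype.card_bool, nsmul_eq_mul]
  push_cast
  rw [← mul_pow]
  congr 1
  ring

/-- The first term on the right exceeds `1` when `y` and `y'` differ in fewer than `m / 4`
coordinates; otherwise the expectation of the bound `badInd_le` gives the remaining terms. -/
lemma EG_badInd_le {δ p θ : ℝ} {n m l : ℕ} (c : ℝ) (φ : Lab m l ↪ Fin n) (ω : Aux n m)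
    (hδ : 0 < δ) (hp : δ ≤ p) (hp' : p ≤ 1 - δ) (hn : 0 < n) (hm : δ * n ≤ 4 * m) (hmn : m ≤ n)
    (hθ0 : 0 < θ) (hθ : θ ^ 2 * n = 1) :
    EG n p (fun G => badInd c φ G ω) ≤ (3 / 2) ^ m * (16 / 81) ^ hd ω.2.1 ω.2.2
      + (Real.exp (c * n / 4) * kap δ ^ m
        + n * (Real.exp (-(θ * (n:ℝ) ^ ((3:ℝ) / 4))) * (2 * Real.exp 1))) := by
  have hp0 : 0 ≤ p := by linarith
  have hp1 : p ≤ 1 := by linarith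
  have hk0 : 0 ≤ kap δ := by rw [kap]; positivity
  by_cases hd4 : 4 * hd ω.2.1 ω.2.2 < m
  · have h1 : EG n p (fun G => badInd c φ G ω) ≤ 1 := by
      rw [← EG_one n p]
      refine EG_mono hp0 hp1 fun G => ?_
      unfold badInd
      split_ifs <;> norm_num
    have h2 : (1:ℝ) ≤ (3 / 2) ^ m * (16 / 81) ^ hd ω.2.1 ω.2.2 := by
      have h3 : ((3:ℝ) / 2) ^ (4 * hd ω.2.1 ω.2.2) ≤ (3 / 2) ^ m :=
        pow_le_pow_right₀ (by norm_num) hd4.le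
      have h4 : (1:ℝ) = (3 / 2) ^ (4 * hd ω.2.1 ω.2.2) * (16 / 81) ^ hd ω.2.1 ω.2.2 := by
        rw [pow_mul, ← mul_pow]
        norm_num
      calc (1:ℝ) = _ := h4
        _ ≤ _ := by gcongr
    have h5 : 0 ≤ Real.exp (c * n / 4) * kap δ ^ m
        + n * (Real.exp (-(θ * (n:ℝ) ^ ((3:ℝ) / 4))) * (2 * Real.exp 1)) := by positivity
    linarith
  · push Not at hd4
    have h0 : (0:ℝ) ≤ (3 / 2) ^ m * (16 / 81) ^ hd ω.2.1 ω.2.2 := by positivity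
    have hmn' : (m:ℝ) ≤ n := by exact_mod_cast hmn
    have h1 := EG_mono hp0 hp1 (fun G => badInd_le c φ G ω θ hθ0 hθ)
    rw [EG_add, EG_mul, EG_sum] at h1
    simp_rw [EG_mul, EG_add] at h1
    have h2 : EG n p (fun G => ∏ i, (3 + Real.cos (θ * LA φ G ω i)) / 4) ≤ kap δ ^ m := by
      simp only [LA]
      rw [EG_prod_cos]
      refine pow_le_pow_left₀ ?_ (factor_le hδ hp hp' hn hm hd4 hθ0 hθ) m
      have : 0 ≤ (1 - 2 * (p * (1 - p)) * (1 - Real.cos θ)) ^ (2 * hd ω.2.1 ω.2.2) := by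
        rw [pow_mul]; positivity
      linarith
    have h3 : ∀ s : ℝ, s ^ 2 = θ ^ 2 → ∀ i,
        EG n p (fun G => Real.exp (s * LA φ G ω i)) ≤ Real.exp 1 := by
      intro s hs i
      refine (EG_exp_Lc _ p hp0 hp1 _ _ i s).trans (Real.exp_le_exp.2 ?_)
      rw [hs, ← hθ]
      gcongr
    have h4 : ∑ i : Fin m, Real.exp (-(θ * (n:ℝ) ^ ((3:ℝ) / 4)))
        * (EG n p (fun G => Real.exp (θ * LA φ G ω i))
          + EG n p (fun G => Real.exp (-θ * LA φ G ω i)))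
        ≤ n * (Real.exp (-(θ * (n:ℝ) ^ ((3:ℝ) / 4))) * (2 * Real.exp 1)) := by
      calc _ ≤ ∑ i : Fin m, Real.exp (-(θ * (n:ℝ) ^ ((3:ℝ) / 4))) * (2 * Real.exp 1) := by
            refine Finset.sum_le_sum fun i _ => mul_le_mul_of_nonneg_left ?_ (Real.exp_pos _).le
            linarith [h3 θ rfl i, h3 (-θ) (by ring) i]
        _ = m * (Real.exp (-(θ * (n:ℝ) ^ ((3:ℝ) / 4))) * (2 * Real.exp 1)) := by simp
        _ ≤ _ := by gcongr
    have h5 := mul_le_mul_of_nonneg_left h2 (Real.exp_pos (c * n / 4)).le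
    linarith

lemma EG_badFrac_le {δ p θ : ℝ} {n m l : ℕ} (c : ℝ) (φ : Lab m l ↪ Fin n)
    (hδ : 0 < δ) (hp : δ ≤ p) (hp' : p ≤ 1 - δ) (hn : 0 < n) (hm : δ * n ≤ 4 * m) (hmn : m ≤ n)
    (hθ0 : 0 < θ) (hθ : θ ^ 2 * n = 1) :
    EG n p (fun G => badFrac c φ G) ≤ (9 / 10) ^ m
      + (Real.exp (c * n / 4) * kap δ ^ m
        + n * (Real.exp (-(θ * (n:ℝ) ^ ((3:ℝ) / 4))) * (2 * Real.exp 1))) := by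
  have hA : (0:ℝ) < Fintype.card (Aux n m) := by exact_mod_cast Fintype.card_pos
  set B := Real.exp (c * n / 4) * kap δ ^ m
        + n * (Real.exp (-(θ * (n:ℝ) ^ ((3:ℝ) / 4))) * (2 * Real.exp 1)) with hB
  have h1 : EG n p (fun G => badFrac c φ G)
      = (∑ ω, EG n p (fun G => badInd c φ G ω)) / Fintype.card (Aux n m) := by
    rw [← EG_sum, div_eq_inv_mul, ← EG_mul]
    congr 1
    funext G
    rw [badFrac, div_eq_inv_mul]
  rw [h1, div_le_iff₀ hA]
  refine (Finset.sum_le_sum fun ω _ =>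
    EG_badInd_le c φ ω hδ hp hp' hn hm hmn hθ0 hθ).trans ?_
  rw [← hB, Finset.sum_add_distrib, Finset.sum_const, Finset.card_univ, nsmul_eq_mul, add_mul,
    mul_comm B]
  refine add_le_add ?_ le_rfl
  rw [card_Aux, Fintype.sum_prod_type]
  simp_rw [← Finset.mul_sum]
  rw [Fintype.sum_prod_type]
  simp only []
  rw [sum_pow_hd, Finset.sum_const, Finset.card_univ, nsmul_eq_mul]
  have h2 : ((3:ℝ) / 2) ^ m * (2 + 2 * (16 / 81)) ^ m ≤ (9 / 10) ^ m * (2 ^ m) ^ 2 := by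
    rw [← pow_mul, mul_comm m 2, pow_mul, ← mul_pow, ← mul_pow]
    exact pow_le_pow_left₀ (by norm_num) (by norm_num) m
  have h3 := mul_le_mul_of_nonneg_left h2
    (Nat.cast_nonneg (α := ℝ) (Fintype.card (Equiv.Perm (Fin n))))
  linarith

/-! ### Asymptotics and conclusion -/

/-- The numerical inequalities needed for large `n`, in the variable `s = n ^ (1/8)`. -/
lemma eventually_bounds (a b : ℝ) (ha : 0 < a) (hb : 0 < b) :
    ∀ᶠ s : ℝ in Filter.atTop,
      Real.exp (-(b * s ^ 8)) + (Real.exp (-(a * s ^ 8))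
        + s ^ 8 * (Real.exp (-s ^ 2) * (2 * Real.exp 1))) ≤ Real.exp (-(2 * s))
      ∧ s ^ 4 * Real.exp (-s) ≤ 1 := by
  have t8 := (Real.tendsto_pow_mul_exp_neg_atTop_nhds_zero 8).eventually_le_const
    (show (0:ℝ) < (4 * Real.exp 1)⁻¹ by positivity)
  have t4 := (Real.tendsto_pow_mul_exp_neg_atTop_nhds_zero 4).eventually_le_const
    (show (0:ℝ) < 1 by norm_num)
  filter_upwards [t8, t4, Filter.eventually_ge_atTop 3, Filter.eventually_ge_atTop (4 / a),
    Filter.eventually_ge_atTop (4 / b)] with s h8 h4 hs hsa hsb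
  refine ⟨?_, h4⟩
  have key : ∀ b : ℝ, 0 < b → 4 / b ≤ s →
      Real.exp (-(b * s ^ 8)) ≤ Real.exp (-(2 * s)) / 4 := by
    intro b hb hsb
    rw [div_le_iff₀ hb] at hsb
    have h1 : s ^ 2 ≤ s ^ 8 := pow_le_pow_right₀ (by linarith) (by norm_num)
    have h2 : 2 * s + 2 ≤ b * s ^ 8 := by
      have := mul_le_mul_of_nonneg_left h1 hb.le
      nlinarith
    have h3 : Real.exp (-(b * s ^ 8)) ≤ Real.exp (-(2 * s)) * Real.exp (-2) := by
      rw [← Real.exp_add]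
      exact Real.exp_le_exp.2 (by linarith)
    have h5 : Real.exp (-2) ≤ 1 / 4 := by
      rw [Real.exp_neg, ← one_div]
      refine one_div_le_one_div_of_le (by norm_num) ?_
      have h6 : (2:ℝ) ≤ Real.exp 1 := by linarith [Real.add_one_le_exp (1:ℝ)]
      have h7 : Real.exp 2 = Real.exp 1 * Real.exp 1 := by
        rw [← Real.exp_add]; norm_num
      nlinarith
    have h6 := mul_le_mul_of_nonneg_left h5 (Real.exp_pos (-(2 * s))).le
    linarith
  have h5 : s ^ 8 * (Real.exp (-s ^ 2) * (2 * Real.exp 1)) ≤ Real.exp (-(2 * s)) / 2 := by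
    have h6 : Real.exp (-s ^ 2) ≤ Real.exp (-(2 * s)) * Real.exp (-s) := by
      rw [← Real.exp_add]
      exact Real.exp_le_exp.2 (by nlinarith)
    calc _ ≤ s ^ 8 * (Real.exp (-(2 * s)) * Real.exp (-s) * (2 * Real.exp 1)) := by gcongr
      _ = (s ^ 8 * Real.exp (-s)) * (Real.exp (-(2 * s)) * (2 * Real.exp 1)) := by ring
      _ ≤ (4 * Real.exp 1)⁻¹ * (Real.exp (-(2 * s)) * (2 * Real.exp 1)) := by gcongr
      _ = _ := by field_simp; norm_num
  linarith [key a ha hsa, key b hb hsb]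

/-- Markov's inequality for the binomial random graph. -/
lemma PrGnp_ge {n : ℕ} {p : ℝ} (hp0 : 0 ≤ p) (hp1 : p ≤ 1) (P : Finset (Sym2 (Fin n)) → Prop)
    (F : Finset (Sym2 (Fin n)) → ℝ) (hF : ∀ G, 0 ≤ F G) (s : ℝ)
    (hP : ∀ G, F G ≤ Real.exp (-s) → P G) (hE : EG n p F ≤ Real.exp (-(2 * s))) :
    1 - Real.exp (-s) ≤ PrGnp n p P := by
  classical
  have h1 : PrGnp n p P = EG n p (fun G => if P G then 1 else 0) := by
    unfold PrGnp EG
    refine Finset.sum_congr rfl fun G _ => ?_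
    by_cases h : P G <;> simp [h]
  have h2 : ∀ G, 1 + -Real.exp s * F G ≤ if P G then (1:ℝ) else 0 := by
    intro G
    have h0 := mul_nonneg (Real.exp_pos s).le (hF G)
    split_ifs with h
    · linarith
    · have h3 : Real.exp (-s) < F G := lt_of_not_ge fun h' => h (hP G h')
      have h4 := mul_lt_mul_of_pos_left h3 (Real.exp_pos s)
      rw [← Real.exp_add] at h4
      simp only [add_neg_cancel, Real.exp_zero] at h4
      linarith
  have h3 := EG_mono hp0 hp1 h2
  rw [EG_add, EG_mul, EG_one] at h3
  have h4 := mul_le_mul_of_nonneg_left hE (Real.exp_pos s).le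
  rw [← Real.exp_add, show s + -(2 * s) = -s by ring] at h4
  rw [h1]
  linarith

/-- The pairs and fixed vertices fit into `[n]`, with linearly many pairs. -/
lemma exists_labelling {δ : ℝ} {n k : ℕ} (hn : 0 < n) (hδn : 2 ≤ δ * n) (hk : δ ≤ (k:ℝ) / n)
    (hk' : (k:ℝ) / n ≤ 1 - δ) :
    ∃ m l : ℕ, m + m + l = k ∧ m ≤ n ∧ δ * n ≤ 4 * m ∧ Nonempty (Lab m l ↪ Fin n) := by
  have hn0 : (0:ℝ) < n := by exact_mod_cast hn
  rw [le_div_iff₀ hn0] at hk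
  rw [div_le_iff₀ hn0] at hk'
  have hkn : k ≤ n := by
    have : (k:ℝ) ≤ n := by nlinarith
    exact_mod_cast this
  obtain ⟨j, rfl⟩ := Nat.exists_eq_add_of_le hkn
  push_cast at *
  refine ⟨min k j / 2, k - (min k j / 2 + min k j / 2), by omega, by omega, ?_, ?_⟩
  · have h1 : min k j ≤ 2 * (min k j / 2) + 1 := by omega
    have h2 : (min k j : ℝ) ≤ 2 * ((min k j / 2 : ℕ) : ℝ) + 1 := by exact_mod_cast h1
    have h3 : δ * (k + j) ≤ (min k j : ℝ) := le_min hk (by linarith)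
    linarith
  · refine Function.Embedding.nonempty_of_card_le ?_
    simp [Lab]
    omega

/-- Corollary 3.2: interval upper bound in `G_{n,p}`.
Fix `δ, ε > 0`. There are `C > 0`, `η > 0`, `n₀` such that for all `n ≥ n₀`, `p ∈ [δ, 1-δ]`
and `k` with `k/n ∈ [δ, 1-δ]`, with probability at least `1 - exp(-n^η)` over `G_{n,p}`:
for every `z ∈ ℝ` and every `r ≥ n^(3/4+ε)`, `P_S(e(S) ∈ [z, z+r]) ≤ C·r/n`. -/
theorem stmt_13 (δ ε : ℝ) (hδ : 0 < δ) (hε : 0 < ε) :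
    ∃ C > (0:ℝ), ∃ η > (0:ℝ), ∃ n₀ : ℕ, ∀ n ≥ n₀, ∀ p : ℝ, δ ≤ p → p ≤ 1 - δ →
      ∀ k : ℕ, δ ≤ (k:ℝ)/n → (k:ℝ)/n ≤ 1 - δ →
      PrGnp n p (fun G => ∀ z r : ℝ, r ≥ (n:ℝ) ^ ((3:ℝ)/4 + ε) →
          Pru (kSets n k) (fun S => (edgesIn G S : ℝ) ∈ Set.Icc z (z + r)) ≤ C * r / n)
        ≥ 1 - Real.exp (-(n:ℝ) ^ η) := by
  have hκ := kap_lt_one hδ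
  have hκ0 : 0 ≤ kap δ := by rw [kap]; positivity
  obtain ⟨c, hcdef⟩ : ∃ c, c = (1 - kap δ) * δ / 2 := ⟨_, rfl⟩
  have hc : 0 < c := by
    rw [hcdef]
    have := mul_pos (sub_pos.2 hκ) hδ
    linarith
  have hs : Filter.Tendsto (fun n : ℕ => (n:ℝ) ^ ((1:ℝ) / 8)) Filter.atTop Filter.atTop :=
    (tendsto_rpow_atTop (by norm_num)).comp tendsto_natCast_atTop_atTop
  obtain ⟨n₀, hn₀⟩ := Filter.eventually_atTop.1
    ((hs.eventually (eventually_bounds (c / 4) (δ / 40) (by linarith) (by linarith))).and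
      (((tendsto_natCast_atTop_atTop (R := ℝ)).eventually_ge_atTop (2 / δ)).and
        (Filter.eventually_ge_atTop 1)))
  refine ⟨4 * (1 + √(64 * Real.pi / c)), by positivity, 1 / 8, by norm_num, n₀, ?_⟩
  intro n hn p hp hp' k hk hk'
  obtain ⟨⟨hb, hb4⟩, hn2, hn1⟩ := hn₀ n hn
  have hn0 : (0:ℝ) < n := by exact_mod_cast hn1
  have hn1' : (1:ℝ) ≤ n := by exact_mod_cast hn1
  rw [div_le_iff₀ hδ, mul_comm] at hn2
  obtain ⟨m, l, hml, hmn, hm, ⟨φ⟩⟩ := exists_labelling hn1 hn2 hk hk'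
  set s : ℝ := (n:ℝ) ^ ((1:ℝ) / 8) with hsdef
  have hs0 : 0 < s := by positivity
  have hs8 : s ^ 8 = n := by
    rw [hsdef, ← Real.rpow_natCast, ← Real.rpow_mul hn0.le]; norm_num
  have hs6 : (n:ℝ) ^ ((3:ℝ) / 4) = s ^ 6 := by
    rw [hsdef, ← Real.rpow_natCast, ← Real.rpow_mul hn0.le]; norm_num
  refine PrGnp_ge (by linarith) (by linarith) _ (badFrac c φ) (badFrac_nonneg c φ) s ?_ ?_
  · intro G hG z r hr
    have hr' : (n:ℝ) ^ ((3:ℝ) / 4) ≤ r :=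
      (Real.rpow_le_rpow_of_exponent_le hn1' (by linarith)).trans hr
    refine (Pru_le_of_badFrac c hc φ hml G z r hn1 hr').trans ?_
    have h1 : √(badFrac c φ G) ≤ r / n := by
      have h2 : badFrac c φ G ≤ (1 / s ^ 2) ^ 2 := by
        refine hG.trans ?_
        rw [div_pow, one_pow, ← pow_mul, le_div_iff₀ (by positivity), mul_comm]
        exact hb4
      refine (Real.sqrt_le_left (by positivity) |>.2 h2).trans ?_
      rw [hs6] at hr'
      rw [← hs8, div_le_div_iff₀ (by positivity) (by positivity)]
      have := mul_le_mul_of_nonneg_right hr' (by positivity : 0 ≤ s ^ 2)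
      nlinarith
    have h3 : 4 * (1 + √(64 * Real.pi / c)) * r / n
        = 4 * (r / n + √(64 * Real.pi / c) * (r / n)) := by ring
    rw [h3]
    linarith
  · -- `θ = n ^ (-1/2)`, so that `θ * n ^ (3/4) = n ^ (1/4) = s ^ 2`
    refine (EG_badFrac_le (θ := 1 / s ^ 4) c φ hδ hp hp' hn1 hm hmn (by positivity)
      (by rw [← hs8]; field_simp)).trans (le_trans ?_ hb)
    have hm' : δ * n / 4 ≤ m := by linarith
    refine add_le_add ?_ (add_le_add ?_ ?_)
    · have h1 : (9:ℝ) / 10 ≤ Real.exp (-(1 / 10)) := by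
        linarith [Real.add_one_le_exp (-(1 / 10) : ℝ)]
      refine (pow_le_pow_left₀ (by norm_num) h1 m).trans ?_
      rw [← Real.exp_nat_mul, hs8]
      exact Real.exp_le_exp.2 (by linarith)
    · have h1 : kap δ ≤ Real.exp (-(1 - kap δ)) := by
        linarith [Real.add_one_le_exp (-(1 - kap δ) : ℝ)]
      have h2 := pow_le_pow_left₀ hκ0 h1 m
      rw [← Real.exp_nat_mul] at h2
      refine (mul_le_mul_of_nonneg_left h2 (Real.exp_pos _).le).trans ?_
      rw [← Real.exp_add, hs8]
      refine Real.exp_le_exp.2 ?_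
      have h3 := mul_le_mul_of_nonneg_left hm' (sub_pos.2 hκ).le
      rw [hcdef]
      linarith
    · rw [hs8, hs6]
      refine le_of_eq ?_
      congr 4
      field_simp
end
end

section
/- Fix δ > 0, β > 0 and ε > 0. Then there exists n₀ such that the following holds for all n ≥ n₀: let p, k satisfy p ∈ [δ, 1−δ] and k/n ∈ [δ, 1−δ], let a, t be positive integers with t ≤ k/2 and a ≤ t^{3/2}·n^{2β−1/2}, let S' ⊆ [n] be a fixed set with |S'| = k−t, set m = ⌊(n−k+t)/t⌋, let 𝒯 = {T₁,…,T_m} be a family of pairwise disjoint t-element subsets of [n]∖S', let T be uniform on 𝒯, and let A = [z, z+a) for some z. Then with probability at least 1 − e^{−n^ε} over G = G_{n,p}: |P_T(e(S'∪T) − e(S') ∈ A) − P(Y ∈ A)| ≤ Δ_A, where Y ~ Bin((k−t)t + t(t−1)/2, p) and Δ_A = e^{−n^ε}/m if P(Y ∈ A) ≤ e^{−n^ε}/m, and Δ_A = n^{β+ε}/m otherwise. -/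
/-!
The pairs gained when `S'` is enlarged by `T` (`newPairs S' T`) are disjoint for disjoint sets `T`,
and each such collection has `(k - t) t + t (t - 1) / 2` elements. Hence the number `X` of `T ∈ 𝒯`
with `e(S' ∪ T) - e(S') ∈ A` is distributed as `Bin(m, q)` with `q = P(Y ∈ A)`, and the claim is a
concentration statement for `X` (`hits` below).

If `q ≤ exp(-n ^ ε) / m`, then `X = 0` except with probability `m q ≤ exp(-n ^ ε)`, and `X = 0` gives
deviation `q ≤ Δ_A`.

Otherwise a Chernoff bound (`hits_chernoff`) with exponent parameter `± 2 n ^ (-β)` shows that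
`|X - m q| ≤ n ^ (β + ε)` with the required probability, provided that `m q = O(n ^ (2 β))`
(`mean_bound`). This holds because `A` contains at most `a` integers, each having probability
`O(1 / √(n t))` under the binomial law of `Y`.

The bound on the point probabilities `b_ν(j)` of `Bin(ν, p)` is elementary: with `M = ν + 1`,
`M p (1 - p) (b_ν(j) - b_ν(j - 1)) = b_M(j) (M p - j)`, so summing over `j` and applying
Cauchy–Schwarz together with the variance `M p (1 - p)` of `Bin(M, p)` yields
`b_ν(j) ≤ 1 / √(M p (1 - p))` (`binMass_telescope`, `binMass_sq_le`).
-/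

open Finset MeasureTheory ProbabilityTheory

noncomputable section

/-! ### The Bernoulli product measure on subsets of a finite set -/

/-- Expectation of `f G` when `G` is a random subset of the finite set `E` containing each element
independently with probability `p`. -/
def bernEx {α : Type*} (E : Finset α) (p : ℝ) (f : Finset α → ℝ) : ℝ :=
  ∑ G ∈ E.powerset, p ^ G.card * (1 - p) ^ (E.card - G.card) * f G

lemma bernEx_const {α : Type*} (E : Finset α) (p c : ℝ) : bernEx E p (fun _ => c) = c := by
  unfold bernEx
  rw [← Finset.sum_mul, Finset.sum_pow_mul_eq_add_pow]
  simp

lemma bernEx_add {α : Type*} (E : Finset α) (p : ℝ) (f g : Finset α → ℝ) :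
    bernEx E p (fun G => f G + g G) = bernEx E p f + bernEx E p g := by
  unfold bernEx
  rw [← Finset.sum_add_distrib]
  exact Finset.sum_congr rfl fun G _ => by ring

lemma bernEx_mul_left {α : Type*} (E : Finset α) (p c : ℝ) (f : Finset α → ℝ) :
    bernEx E p (fun G => c * f G) = c * bernEx E p f := by
  unfold bernEx
  rw [Finset.mul_sum]
  exact Finset.sum_congr rfl fun G _ => by ring

lemma bernEx_sum {α ι : Type*} (E : Finset α) (p : ℝ) (s : Finset ι) (f : ι → Finset α → ℝ) :
    bernEx E p (fun G => ∑ i ∈ s, f i G) = ∑ i ∈ s, bernEx E p (f i) := by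
  unfold bernEx
  rw [Finset.sum_comm]
  exact Finset.sum_congr rfl fun G _ => by rw [Finset.mul_sum]

lemma bernEx_mono {α : Type*} (E : Finset α) {p : ℝ} (hp0 : 0 ≤ p) (hp1 : p ≤ 1)
    {f g : Finset α → ℝ} (h : ∀ G ⊆ E, f G ≤ g G) : bernEx E p f ≤ bernEx E p g := by
  unfold bernEx
  refine Finset.sum_le_sum fun G hG => mul_le_mul_of_nonneg_left (h G (Finset.mem_powerset.1 hG)) ?_
  have : 0 ≤ 1 - p := by linarith
  positivity

/-- The traces of the random set on `E₁` and on its complement in `E` are independent. -/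
lemma bernEx_split {α : Type*} [DecidableEq α] {E E₁ : Finset α} (hE : E₁ ⊆ E) (p : ℝ)
    (f g : Finset α → ℝ) :
    bernEx E p (fun G => f (G ∩ E₁) * g (G \ E₁)) = bernEx E₁ p f * bernEx (E \ E₁) p g := by
  unfold bernEx
  rw [Finset.sum_mul_sum, ← Finset.sum_product']
  refine Finset.sum_nbij' (fun G => (G ∩ E₁, G \ E₁)) (fun q => q.1 ∪ q.2) ?_ ?_ ?_ ?_ ?_
  · intro G hG
    rw [Finset.mem_powerset] at hG
    simp only [Finset.mem_product, Finset.mem_powerset]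
    exact ⟨Finset.inter_subset_right, Finset.sdiff_subset_sdiff hG subset_rfl⟩
  · rintro ⟨A, B⟩ h
    simp only [Finset.mem_product, Finset.mem_powerset] at h ⊢
    exact Finset.union_subset (h.1.trans hE) (h.2.trans Finset.sdiff_subset)
  · intro G _
    ext x
    simp only [Finset.mem_union, Finset.mem_inter, Finset.mem_sdiff]
    tauto
  · rintro ⟨A, B⟩ h
    simp only [Finset.mem_product, Finset.mem_powerset] at h
    obtain ⟨hA, hB⟩ := h
    have hB' : ∀ x ∈ B, x ∉ E₁ := fun x hx => (Finset.mem_sdiff.1 (hB hx)).2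
    ext x
    · simp only [Finset.mem_union, Finset.mem_inter]
      have := @hA x
      have := hB' x
      tauto
    · simp only [Finset.mem_union, Finset.mem_sdiff]
      have := @hA x
      have := hB' x
      tauto
  · intro G hG
    rw [Finset.mem_powerset] at hG
    have h1 : (G ∩ E₁).card + (G \ E₁).card = G.card := Finset.card_inter_add_card_sdiff G E₁
    have h2 : (E \ E₁).card + E₁.card = E.card := Finset.card_sdiff_add_card_eq_card hE
    have h3 : (G ∩ E₁).card ≤ E₁.card := Finset.card_le_card Finset.inter_subset_right
    have h4 : (G \ E₁).card ≤ (E \ E₁).card :=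
      Finset.card_le_card (Finset.sdiff_subset_sdiff hG subset_rfl)
    have h5 : E.card - G.card
        = (E₁.card - (G ∩ E₁).card) + ((E \ E₁).card - (G \ E₁).card) := by omega
    simp only
    rw [h5, ← h1, pow_add, pow_add]
    ring

lemma bernEx_restrict {α : Type*} [DecidableEq α] {E E₁ : Finset α} (hE : E₁ ⊆ E) (p : ℝ)
    (f : Finset α → ℝ) : bernEx E p (fun G => f (G ∩ E₁)) = bernEx E₁ p f := by
  have := bernEx_split hE p f (fun _ => 1)
  simpa [bernEx_const] using this

/-- The traces of the random set on pairwise disjoint sets `B i` are independent. -/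
lemma bernEx_prod {α ι : Type*} [DecidableEq α] (p : ℝ) (B : ι → Finset α)
    (f : ι → Finset α → ℝ) (s : Finset ι) : ∀ E : Finset α, (∀ i ∈ s, B i ⊆ E) →
    (∀ i ∈ s, ∀ j ∈ s, i ≠ j → Disjoint (B i) (B j)) →
    bernEx E p (fun G => ∏ i ∈ s, f i (G ∩ B i)) = ∏ i ∈ s, bernEx (B i) p (f i) := by
  classical
  induction s using Finset.induction_on with
  | empty => intro E _ _; simp [bernEx_const]
  | insert i s hi ih =>
    intro E hE hd
    have hdi : ∀ j ∈ s, Disjoint (B j) (B i) := fun j hj =>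
      hd j (Finset.mem_insert_of_mem hj) i (Finset.mem_insert_self i s)
        (fun h => hi (h ▸ hj))
    have key : (fun G => ∏ j ∈ insert i s, f j (G ∩ B j))
        = fun G => f i (G ∩ B i) * (fun H => ∏ j ∈ s, f j (H ∩ B j)) (G \ B i) := by
      funext G
      rw [Finset.prod_insert hi]
      congr 1
      refine Finset.prod_congr rfl fun j hj => ?_
      congr 1
      ext x
      simp only [Finset.mem_inter, Finset.mem_sdiff]
      have := fun h : x ∈ B j => Finset.disjoint_left.1 (hdi j hj) h
      tauto
    rw [key, bernEx_split (hE i (Finset.mem_insert_self i s)) p (f i)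
      (fun H => ∏ j ∈ s, f j (H ∩ B j)), Finset.prod_insert hi, ih]
    · intro j hj
      exact Finset.subset_sdiff.2 ⟨hE j (Finset.mem_insert_of_mem hj), hdi j hj⟩
    · intro j hj l hl
      exact hd j (Finset.mem_insert_of_mem hj) l (Finset.mem_insert_of_mem hl)

open Classical in
lemma bernEx_card {α : Type*} (E : Finset α) (p : ℝ) (P : ℕ → Prop) :
    bernEx E p (fun G => if P G.card then 1 else 0) = binomPr E.card p P := by
  unfold bernEx binomPr
  rw [Finset.sum_powerset_apply_card
    (fun j => p ^ j * (1 - p) ^ (E.card - j) * if P j then (1 : ℝ) else 0)]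
  refine Finset.sum_congr rfl fun j _ => ?_
  by_cases h : P j <;> simp [h, mul_assoc]

open Classical in
lemma PrGnp_eq (n : ℕ) (p : ℝ) (P : Finset (Sym2 (Fin n)) → Prop) :
    PrGnp n p P = bernEx (completeEdges n) p (fun G => if P G then 1 else 0) := by
  unfold PrGnp bernEx
  exact Finset.sum_congr rfl fun G _ => by by_cases h : P G <;> simp [h]

/-- Markov-type bound: if `g ≥ 0` and `g ≥ 1` wherever `P` fails, then `P` fails with probability
at most the expectation of `g`. -/
lemma PrGnp_ge_s14 {n : ℕ} {p : ℝ} (hp0 : 0 ≤ p) (hp1 : p ≤ 1) {P : Finset (Sym2 (Fin n)) → Prop}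
    {g : Finset (Sym2 (Fin n)) → ℝ} {b : ℝ} (hg : ∀ G ⊆ completeEdges n, 0 ≤ g G)
    (hg1 : ∀ G ⊆ completeEdges n, ¬ P G → 1 ≤ g G) (hb : bernEx (completeEdges n) p g ≤ b) :
    PrGnp n p P ≥ 1 - b := by
  classical
  have h := bernEx_mono (completeEdges n) hp0 hp1 (f := fun _ => (1 : ℝ))
    (g := fun G => (if P G then 1 else 0) + g G) (fun G hG => by
      by_cases h : P G
      · simpa [h] using hg G hG
      · simpa [h] using hg1 G hG h)
  rw [bernEx_const, bernEx_add] at h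
  have h2 := PrGnp_eq n p P
  have h3 : bernEx (completeEdges n) p (fun G => if P G then (1 : ℝ) else 0) = PrGnp n p P := by
    rw [h2]
  linarith

/-! ### The maximal point probability of a binomial distribution -/

/-- The point probability `P(Bin(ν, p) = j)`. -/
def binMass (ν : ℕ) (p : ℝ) (j : ℕ) : ℝ := (ν.choose j : ℝ) * p ^ j * (1 - p) ^ (ν - j)

lemma binMass_nonneg (ν : ℕ) {p : ℝ} (hp0 : 0 ≤ p) (hp1 : p ≤ 1) (j : ℕ) : 0 ≤ binMass ν p j := by
  have : 0 ≤ 1 - p := by linarith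
  unfold binMass
  positivity

lemma binMass_sum (ν : ℕ) (p : ℝ) : ∑ j ∈ Finset.range (ν + 1), binMass ν p j = 1 := by
  have := congrArg (Polynomial.eval p) (bernsteinPolynomial.sum ℝ ν)
  simpa [Polynomial.eval_finsetSum, bernsteinPolynomial, binMass] using this

lemma binMass_variance (ν : ℕ) (p : ℝ) :
    ∑ j ∈ Finset.range (ν + 1), (ν * p - j) ^ 2 * binMass ν p j = ν * p * (1 - p) := by
  have := congrArg (Polynomial.eval p) (bernsteinPolynomial.variance ℝ ν)
  simpa [Polynomial.eval_finsetSum, bernsteinPolynomial, binMass] using this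

/-- The increments of `binMass ν p` are multiples of `binMass (ν + 1) p` weighted by the centred
variable; this is the telescoped form. -/
lemma binMass_telescope (ν : ℕ) (p : ℝ) (j : ℕ) (hj : j ≤ ν) :
    ((ν + 1 : ℕ) : ℝ) * p * (1 - p) * binMass ν p j
      = ∑ i ∈ Finset.range (j + 1), (((ν + 1 : ℕ) : ℝ) * p - i) * binMass (ν + 1) p i := by
  induction j with
  | zero => simp [binMass]; ring
  | succ j ih =>
    rw [Finset.sum_range_succ, ← ih (by omega)]
    obtain ⟨r, rfl⟩ := Nat.exists_eq_add_of_le hj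
    have e1 : j + 1 + r - (j + 1) = r := by omega
    have e2 : j + 1 + r - j = r + 1 := by omega
    have e3 : j + 1 + r + 1 - (j + 1) = r + 1 := by omega
    have h1 : ((j + 1 + r + 1 : ℕ) : ℝ) * ((j + 1 + r).choose j : ℝ)
        = ((j + 1 + r + 1).choose (j + 1) : ℝ) * ((j + 1 : ℕ) : ℝ) := by
      exact_mod_cast Nat.add_one_mul_choose_eq (j + 1 + r) j
    have h2 : ((j + 1 + r + 1).choose (j + 1) : ℝ)
        = ((j + 1 + r).choose j : ℝ) + ((j + 1 + r).choose (j + 1) : ℝ) := by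
      exact_mod_cast Nat.choose_succ_succ (j + 1 + r) j
    unfold binMass
    rw [e1, e2, e3]
    generalize ((j + 1 + r + 1 : ℕ) : ℝ) = M at *
    generalize ((j + 1 : ℕ) : ℝ) = J at *
    generalize ((j + 1 + r + 1).choose (j + 1) : ℝ) = c at *
    generalize ((j + 1 + r).choose (j + 1) : ℝ) = d at *
    generalize ((j + 1 + r).choose j : ℝ) = e at *
    have h3 : d = c - e := by linarith
    subst h3
    rw [pow_succ, pow_succ]
    linear_combination (-(p ^ j * p * ((1 - p) ^ r * (1 - p)))) * h1

/-- Every point probability of `Bin(ν, p)` is at most `1 / √((ν + 1) p (1 - p))`. -/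
lemma binMass_sq_le (ν : ℕ) {p : ℝ} (hp0 : 0 < p) (hp1 : p < 1) (j : ℕ) (hj : j ≤ ν) :
    ((ν + 1 : ℕ) : ℝ) * p * (1 - p) * binMass ν p j ^ 2 ≤ 1 := by
  have hq : 0 < 1 - p := by linarith
  have hM : (0 : ℝ) < ((ν + 1 : ℕ) : ℝ) := by positivity
  set V : ℝ := ((ν + 1 : ℕ) : ℝ) * p * (1 - p) with hV
  have hVpos : 0 < V := by positivity
  have hb := fun i => binMass_nonneg (ν + 1) hp0.le hp1.le i
  have hb0 := binMass_nonneg ν hp0.le hp1.le j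
  have h1 : V * binMass ν p j
      ≤ ∑ i ∈ Finset.range (ν + 1 + 1),
          |((ν + 1 : ℕ) : ℝ) * p - i| * binMass (ν + 1) p i := by
    rw [hV, binMass_telescope ν p j hj]
    refine (Finset.sum_le_sum fun i _ =>
      mul_le_mul_of_nonneg_right (le_abs_self _) (hb i)).trans ?_
    exact Finset.sum_le_sum_of_subset_of_nonneg
      (Finset.range_subset_range.2 (by omega))
      (fun i _ _ => mul_nonneg (abs_nonneg _) (hb i))
  have h2 := Finset.sum_sq_le_sum_mul_sum_of_sq_le_mul (Finset.range (ν + 1 + 1))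
    (r := fun i : ℕ => |((ν + 1 : ℕ) : ℝ) * p - i| * binMass (ν + 1) p i)
    (f := fun i => binMass (ν + 1) p i)
    (g := fun i : ℕ => (((ν + 1 : ℕ) : ℝ) * p - i) ^ 2 * binMass (ν + 1) p i)
    (fun i _ => hb i) (fun i _ => mul_nonneg (sq_nonneg _) (hb i))
    (fun i _ => by rw [mul_pow, sq_abs]; exact le_of_eq (by ring))
  rw [binMass_sum, binMass_variance, one_mul, ← hV] at h2
  have h3 : (V * binMass ν p j) ^ 2 ≤ V :=
    (pow_le_pow_left₀ (by positivity) h1 2).trans h2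
  have h4 : V * (V * binMass ν p j ^ 2) ≤ V * 1 := by nlinarith
  exact le_of_mul_le_mul_left h4 hVpos

open Classical in
/-- A half-open real interval of integer length `a` holds at most `a` integers. -/
lemma card_Ico_le (s : Finset ℕ) (z : ℝ) (a : ℕ) :
    (s.filter (fun j : ℕ => (j : ℝ) ∈ Set.Ico z (z + a))).card ≤ a := by
  have h : (s.filter (fun j : ℕ => (j : ℝ) ∈ Set.Ico z (z + a))).card
      ≤ (Finset.Ico ⌈z⌉ (⌈z⌉ + a)).card := by
    refine Finset.card_le_card_of_injOn (fun j : ℕ => (j : ℤ)) ?_ ?_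
    · intro j hj
      simp only [Finset.coe_filter, Set.mem_ofPred_eq, Set.mem_Ico] at hj
      simp only [Finset.coe_Ico, Set.mem_Ico]
      refine ⟨Int.ceil_le.2 (by exact_mod_cast hj.2.1), ?_⟩
      have : (j : ℝ) < (⌈z⌉ : ℝ) + a := by
        have := Int.le_ceil z
        linarith [hj.2.2]
      exact_mod_cast this
    · intro x _ y _ hxy
      exact Int.ofNat.inj hxy
  simpa using h

lemma binomPr_Ico_le (ν : ℕ) {p : ℝ} (hp0 : 0 < p) (hp1 : p < 1) (z : ℝ) (a : ℕ) :
    binomPr ν p (fun j => (j : ℝ) ∈ Set.Ico z (z + a))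
      ≤ a / Real.sqrt (((ν + 1 : ℕ) : ℝ) * p * (1 - p)) := by
  classical
  have hq : 0 < 1 - p := by linarith
  set V : ℝ := ((ν + 1 : ℕ) : ℝ) * p * (1 - p) with hV
  have hVpos : 0 < V := by positivity
  have hpt : ∀ j ≤ ν, binMass ν p j ≤ 1 / Real.sqrt V := by
    intro j hj
    rw [le_div_iff₀ (Real.sqrt_pos.2 hVpos)]
    have h := binMass_sq_le ν hp0 hp1 j hj
    have h0 := binMass_nonneg ν hp0.le hp1.le j
    refine abs_le_of_sq_le_sq' ?_ zero_le_one |>.2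
    rw [mul_pow, Real.sq_sqrt hVpos.le]
    linarith
  have h1 : binomPr ν p (fun j => (j : ℝ) ∈ Set.Ico z (z + a))
      = ∑ j ∈ (Finset.range (ν + 1)).filter (fun j : ℕ => (j : ℝ) ∈ Set.Ico z (z + a)),
          binMass ν p j := by
    rw [Finset.sum_filter]
    unfold binomPr binMass
    refine Finset.sum_congr rfl fun j _ => ?_
    congr!
  rw [h1]
  refine (Finset.sum_le_card_nsmul _ _ (1 / Real.sqrt V) ?_).trans ?_
  · intro j hj
    have := Finset.mem_range.1 (Finset.mem_filter.1 hj).1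
    exact hpt j (by omega)
  · rw [nsmul_eq_mul, div_eq_mul_one_div (a : ℝ)]
    refine mul_le_mul_of_nonneg_right ?_ (by positivity)
    exact_mod_cast card_Ico_le _ z a

/-! ### Edges gained when a set is enlarged -/

open Classical in
/-- The pairs inside `S` in the complete graph. -/
def pairsIn {n : ℕ} (S : Finset (Fin n)) : Finset (Sym2 (Fin n)) :=
  (completeEdges n).filter (fun e => ∀ v ∈ e, v ∈ S)

open Classical in
/-- The pairs inside `S ∪ T` which are not inside `S`. -/
def newPairs {n : ℕ} (S T : Finset (Fin n)) : Finset (Sym2 (Fin n)) :=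
  pairsIn (S ∪ T) \ pairsIn S

lemma mem_completeEdges {n : ℕ} (e : Sym2 (Fin n)) : e ∈ completeEdges n ↔ ¬ e.IsDiag := by
  simp [completeEdges]

lemma mem_pairsIn {n : ℕ} (S : Finset (Fin n)) (e : Sym2 (Fin n)) :
    e ∈ pairsIn S ↔ ¬ e.IsDiag ∧ ∀ v ∈ e, v ∈ S := by
  simp [pairsIn, mem_completeEdges]

lemma mem_newPairs {n : ℕ} (S T : Finset (Fin n)) (e : Sym2 (Fin n)) :
    e ∈ newPairs S T ↔ ¬ e.IsDiag ∧ (∀ v ∈ e, v ∈ S ∪ T) ∧ ∃ v ∈ e, v ∉ S := by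
  simp only [newPairs, Finset.mem_sdiff, mem_pairsIn, not_and, not_forall]
  tauto

lemma newPairs_subset {n : ℕ} (S T : Finset (Fin n)) : newPairs S T ⊆ completeEdges n := by
  intro e he
  exact (mem_completeEdges e).2 ((mem_newPairs S T e).1 he).1

lemma pairsIn_mono {n : ℕ} {S U : Finset (Fin n)} (h : S ⊆ U) : pairsIn S ⊆ pairsIn U := by
  intro e he
  rw [mem_pairsIn] at he ⊢
  exact ⟨he.1, fun v hv => h (he.2 v hv)⟩

lemma card_pairsIn {n : ℕ} (S : Finset (Fin n)) : (pairsIn S).card = S.card.choose 2 := by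
  rw [← Sym2.card_image_offDiag]
  congr 1
  ext e
  rw [mem_pairsIn]
  induction e with
  | h x y =>
    simp only [Sym2.mk_isDiag_iff, Sym2.mem_iff, forall_eq_or_imp, forall_eq,
      Finset.mem_image, Finset.mem_offDiag, Prod.exists, Function.uncurry_apply_pair, Sym2.eq_iff]
    constructor
    · rintro ⟨h1, h2, h3⟩
      exact ⟨x, y, ⟨h2, h3, h1⟩, Or.inl ⟨rfl, rfl⟩⟩
    · rintro ⟨u, v, ⟨h1, h2, h3⟩, ⟨rfl, rfl⟩ | ⟨rfl, rfl⟩⟩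
      · exact ⟨h3, h1, h2⟩
      · exact ⟨fun h => h3 h.symm, h2, h1⟩

lemma choose_two_add (s t : ℕ) : (s + t).choose 2 = s.choose 2 + s * t + t.choose 2 := by
  induction t with
  | zero => simp
  | succ t ih =>
    rw [← add_assoc, Nat.choose_succ_succ' (s + t) 1, Nat.choose_succ_succ' t 1, ih]
    simp only [Nat.choose_one_right]
    ring

lemma card_newPairs {n : ℕ} (S T : Finset (Fin n)) (h : Disjoint S T) :
    (newPairs S T).card = S.card * T.card + T.card * (T.card - 1) / 2 := by
  unfold newPairs
  rw [Finset.card_sdiff_of_subset (pairsIn_mono Finset.subset_union_left), card_pairsIn,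
    card_pairsIn, Finset.card_union_of_disjoint h, choose_two_add, Nat.choose_two_right T.card]
  omega

lemma newPairs_disjoint {n : ℕ} {S T U : Finset (Fin n)} (hU : Disjoint T U) :
    Disjoint (newPairs S T) (newPairs S U) := by
  rw [Finset.disjoint_left]
  intro e h1 h2
  rw [mem_newPairs] at h1 h2
  obtain ⟨v, hv, hvS⟩ := h1.2.2
  have a1 := h1.2.1 v hv
  have a2 := h2.2.1 v hv
  rw [Finset.mem_union] at a1 a2
  exact Finset.disjoint_left.1 hU (a1.resolve_left hvS) (a2.resolve_left hvS)

lemma edgesIn_eq {n : ℕ} {G : Finset (Sym2 (Fin n))} (hG : G ⊆ completeEdges n)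
    (S : Finset (Fin n)) : edgesIn G S = (G ∩ pairsIn S).card := by
  classical
  unfold edgesIn
  congr 1
  ext e
  simp only [Finset.mem_filter, Finset.mem_inter, mem_pairsIn]
  constructor
  · rintro ⟨h1, h2⟩
    exact ⟨h1, (mem_completeEdges e).1 (hG h1), h2⟩
  · rintro ⟨h1, _, h2⟩
    exact ⟨h1, h2⟩

lemma edgesIn_sub {n : ℕ} {G : Finset (Sym2 (Fin n))} (hG : G ⊆ completeEdges n)
    (S T : Finset (Fin n)) :
    (edgesIn G (S ∪ T) : ℝ) - (edgesIn G S : ℝ) = ((G ∩ newPairs S T).card : ℝ) := by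
  rw [edgesIn_eq hG, edgesIn_eq hG]
  have h : (G ∩ pairsIn (S ∪ T)).card
      = (G ∩ pairsIn S).card + (G ∩ newPairs S T).card := by
    rw [← Finset.card_union_of_disjoint]
    · congr 1
      have := @pairsIn_mono n S (S ∪ T) Finset.subset_union_left
      ext e
      have := @this e
      simp only [newPairs, Finset.mem_inter, Finset.mem_union, Finset.mem_sdiff]
      tauto
    · rw [Finset.disjoint_left]
      intro e h1 h2
      simp only [newPairs, Finset.mem_inter, Finset.mem_sdiff] at h1 h2
      exact h2.2.2 h1.2
  rw [h]
  push_cast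
  ring

/-! ### The number of successful sets -/

open Classical in
/-- The number of `T ∈ 𝒯` for which the number of new edges satisfies `P`. -/
def hits {n : ℕ} (S : Finset (Fin n)) (𝒯 : Finset (Finset (Fin n))) (P : ℕ → Prop)
    (G : Finset (Sym2 (Fin n))) : ℝ :=
  ∑ T ∈ 𝒯, if P (G ∩ newPairs S T).card then (1 : ℝ) else 0

lemma hits_nonneg {n : ℕ} (S : Finset (Fin n)) (𝒯 : Finset (Finset (Fin n))) (P : ℕ → Prop)
    (G : Finset (Sym2 (Fin n))) : 0 ≤ hits S 𝒯 P G :=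
  Finset.sum_nonneg fun T _ => by split_ifs <;> simp

/-- `hits` is integer-valued. -/
lemma hits_eq_zero_or {n : ℕ} (S : Finset (Fin n)) (𝒯 : Finset (Finset (Fin n))) (P : ℕ → Prop)
    (G : Finset (Sym2 (Fin n))) : hits S 𝒯 P G = 0 ∨ 1 ≤ hits S 𝒯 P G := by
  classical
  have h : hits S 𝒯 P G = ((𝒯.filter (fun T => P (G ∩ newPairs S T).card)).card : ℝ) := by
    unfold hits
    rw [Finset.sum_boole]
  rw [h]
  rcases Nat.eq_zero_or_pos (𝒯.filter (fun T => P (G ∩ newPairs S T).card)).card with h0 | h0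
  · left; simp [h0]
  · right; exact_mod_cast h0

lemma Pru_eq_hits {n : ℕ} {G : Finset (Sym2 (Fin n))} (hG : G ⊆ completeEdges n)
    (S : Finset (Fin n)) (𝒯 : Finset (Finset (Fin n))) (A : Set ℝ) :
    Pru 𝒯 (fun T => ((edgesIn G (S ∪ T) : ℝ) - (edgesIn G S : ℝ)) ∈ A)
      = hits S 𝒯 (fun j => (j : ℝ) ∈ A) G / 𝒯.card := by
  classical
  unfold Pru hits
  rw [Finset.sum_boole]
  congr 2
  simp only [edgesIn_sub hG]

lemma hits_mean {n : ℕ} (S : Finset (Fin n)) (𝒯 : Finset (Finset (Fin n))) (P : ℕ → Prop)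
    (p q : ℝ) (hq : ∀ T ∈ 𝒯, binomPr (newPairs S T).card p P = q) :
    bernEx (completeEdges n) p (hits S 𝒯 P) = 𝒯.card * q := by
  classical
  unfold hits
  rw [bernEx_sum, Finset.sum_congr rfl (g := fun _ => q)]
  · simp
  · intro T hT
    rw [← hq T hT, ← bernEx_card,
      ← bernEx_restrict (newPairs_subset S T) p (fun G => if P G.card then (1 : ℝ) else 0)]

/-- The exponential moments of the number of hits are those of `Bin(|𝒯|, q)`, and are dominated by
those of the Poisson distribution of the same mean. -/
lemma hits_mgf {n : ℕ} (S : Finset (Fin n)) (𝒯 : Finset (Finset (Fin n))) (P : ℕ → Prop)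
    {p : ℝ} (hp0 : 0 ≤ p) (hp1 : p ≤ 1) (q : ℝ)
    (hq : ∀ T ∈ 𝒯, binomPr (newPairs S T).card p P = q)
    (hd : (𝒯 : Set (Finset (Fin n))).Pairwise Disjoint) (x : ℝ) :
    bernEx (completeEdges n) p (fun G => Real.exp (x * hits S 𝒯 P G))
      ≤ Real.exp (𝒯.card * q * (Real.exp x - 1)) := by
  classical
  have h1 : (fun G => Real.exp (x * hits S 𝒯 P G))
      = fun G => ∏ T ∈ 𝒯, (fun _ H => Real.exp (x * if P (Finset.card H) then (1 : ℝ) else 0))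
          T (G ∩ newPairs S T) := by
    funext G
    unfold hits
    rw [Finset.mul_sum, Real.exp_sum]
  rw [h1, bernEx_prod p (newPairs S)
    (fun _ H => Real.exp (x * if P (Finset.card H) then (1 : ℝ) else 0)) 𝒯 _
    (fun T _ => newPairs_subset S T)
    (fun T hT U hU hne => newPairs_disjoint (hd hT hU hne))]
  have h2 : (𝒯.card : ℝ) * q * (Real.exp x - 1) = ∑ T ∈ 𝒯, q * (Real.exp x - 1) := by
    simp [mul_assoc]
  rw [h2, Real.exp_sum]
  refine Finset.prod_le_prod (fun T _ => ?_) (fun T hT => ?_)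
  · have := bernEx_mono (newPairs S T) hp0 hp1 (f := fun _ => (0 : ℝ))
      (g := fun H => Real.exp (x * if P (Finset.card H) then (1 : ℝ) else 0))
      (fun H _ => (Real.exp_pos _).le)
    rwa [bernEx_const] at this
  · have h3 : (fun H : Finset (Sym2 (Fin n)) =>
        Real.exp (x * if P (Finset.card H) then (1 : ℝ) else 0))
        = fun H => 1 + (Real.exp x - 1) * (if P (Finset.card H) then (1 : ℝ) else 0) := by
      funext H
      by_cases h : P H.card <;> simp [h]
    rw [h3, bernEx_add, bernEx_const, bernEx_mul_left]
    have h4 : bernEx (newPairs S T) p (fun H => if P (Finset.card H) then (1 : ℝ) else 0) = q := by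
      rw [← hq T hT, ← bernEx_card]
    rw [h4]
    have := Real.add_one_le_exp (q * (Real.exp x - 1))
    linarith

/-- One-sided Chernoff bound, for either sign of `x`. -/
lemma hits_chernoff {n : ℕ} (S : Finset (Fin n)) (𝒯 : Finset (Finset (Fin n))) (P : ℕ → Prop)
    {p : ℝ} (hp0 : 0 ≤ p) (hp1 : p ≤ 1) (q : ℝ) (hq0 : 0 ≤ q)
    (hq : ∀ T ∈ 𝒯, binomPr (newPairs S T).card p P = q)
    (hd : (𝒯 : Set (Finset (Fin n))).Pairwise Disjoint) (x c : ℝ) (hx : |x| ≤ 1) :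
    bernEx (completeEdges n) p (fun G => Real.exp (x * (hits S 𝒯 P G - 𝒯.card * q) - c))
      ≤ Real.exp (𝒯.card * q * x ^ 2 - c) := by
  have h1 : (fun G => Real.exp (x * (hits S 𝒯 P G - 𝒯.card * q) - c))
      = fun G => Real.exp (-(x * (𝒯.card * q)) - c) * Real.exp (x * hits S 𝒯 P G) := by
    funext G
    rw [← Real.exp_add]
    congr 1
    ring
  rw [h1, bernEx_mul_left]
  refine (mul_le_mul_of_nonneg_left (hits_mgf S 𝒯 P hp0 hp1 q hq hd x)
    (Real.exp_pos _).le).trans ?_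
  rw [← Real.exp_add, Real.exp_le_exp]
  have h2 := (abs_le.1 (Real.abs_exp_sub_one_sub_id_le hx)).2
  have h3 : 0 ≤ (𝒯.card : ℝ) * q := by positivity
  nlinarith

/-! ### Size of the mean -/

lemma binomPr_nonneg (ν : ℕ) {p : ℝ} (hp0 : 0 ≤ p) (hp1 : p ≤ 1) (P : ℕ → Prop) :
    0 ≤ binomPr ν p P := by
  classical
  have : 0 ≤ 1 - p := by linarith
  unfold binomPr
  refine Finset.sum_nonneg fun j _ => ?_
  split_ifs
  · positivity
  · exact le_rfl

/-- The expected number of hits is `O(n ^ (2 β))`, by the local bound on the binomial. -/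
lemma mean_bound {δ β p : ℝ} (hδ : 0 < δ) {n k a t : ℕ} (hn : 0 < n) (hp : δ ≤ p)
    (hp' : p ≤ 1 - δ) (hk : δ ≤ (k : ℝ) / n) (hkn : k ≤ n) (ht : 0 < t) (htk : t ≤ k / 2)
    (ha : (a : ℝ) ≤ (t : ℝ) ^ ((3 : ℝ) / 2) * (n : ℝ) ^ (2 * β - 1 / 2)) (z : ℝ) :
    (((n - k + t) / t : ℕ) : ℝ) * binomPr ((k - t) * t + t * (t - 1) / 2) p
      (fun j => (j : ℝ) ∈ Set.Ico z (z + a))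
      ≤ (n : ℝ) ^ (2 * β) / Real.sqrt (δ ^ 3 / 2) := by
  have hp0 : 0 < p := by linarith
  have hp1 : p < 1 := by linarith
  have hn' : (0 : ℝ) < n := by exact_mod_cast hn
  have ht' : (0 : ℝ) < t := by exact_mod_cast ht
  have hm : (((n - k + t) / t : ℕ) : ℝ) ≤ n / t := by
    refine Nat.cast_div_le.trans ?_
    gcongr
    omega
  set ν := (k - t) * t + t * (t - 1) / 2 with hν
  have hkδ : δ * n ≤ k := (le_div_iff₀ hn').1 hk
  have hν' : δ * n / 2 * t ≤ ((ν + 1 : ℕ) : ℝ) := by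
    have h1 : (k - t) * t ≤ ν + 1 := by omega
    have h2 : (((k - t) * t : ℕ) : ℝ) ≤ ((ν + 1 : ℕ) : ℝ) := by exact_mod_cast h1
    have h3 : (k : ℝ) ≤ 2 * ((k - t : ℕ) : ℝ) := by
      have : k ≤ 2 * (k - t) := by omega
      exact_mod_cast this
    rw [Nat.cast_mul] at h2
    refine le_trans ?_ h2
    gcongr
    linarith
  have hV : δ ^ 3 / 2 * (n * t) ≤ ((ν + 1 : ℕ) : ℝ) * p * (1 - p) := by
    have h1 : δ ≤ 1 - p := by linarith
    calc δ ^ 3 / 2 * (n * t) = (δ * n / 2 * t) * δ * δ := by ring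
      _ ≤ _ := by gcongr
  have hPY := binomPr_Ico_le ν hp0 hp1 z a
  have hsq : Real.sqrt (δ ^ 3 / 2) * ((n : ℝ) ^ ((1 : ℝ) / 2) * (t : ℝ) ^ ((1 : ℝ) / 2))
      ≤ Real.sqrt (((ν + 1 : ℕ) : ℝ) * p * (1 - p)) := by
    rw [← Real.sqrt_eq_rpow, ← Real.sqrt_eq_rpow, ← Real.sqrt_mul hn'.le,
      ← Real.sqrt_mul (by positivity)]
    exact Real.sqrt_le_sqrt hV
  have hs : 0 < Real.sqrt (δ ^ 3 / 2) := Real.sqrt_pos.2 (by positivity)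
  calc _ ≤ (n / t : ℝ) * (a / Real.sqrt (((ν + 1 : ℕ) : ℝ) * p * (1 - p))) :=
        mul_le_mul hm hPY (binomPr_nonneg ν hp0.le hp1.le _) (by positivity)
    _ ≤ (n / t : ℝ) * (((t : ℝ) ^ ((3 : ℝ) / 2) * (n : ℝ) ^ (2 * β - 1 / 2))
          / (Real.sqrt (δ ^ 3 / 2) * ((n : ℝ) ^ ((1 : ℝ) / 2) * (t : ℝ) ^ ((1 : ℝ) / 2)))) := by
        gcongr
    _ = (n : ℝ) ^ (2 * β) / Real.sqrt (δ ^ 3 / 2) := by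
        have e1 : (t : ℝ) ^ ((3 : ℝ) / 2) = t * (t : ℝ) ^ ((1 : ℝ) / 2) := by
          rw [← Real.rpow_one_add' ht'.le (by norm_num)]
          norm_num
        have e2 : (n : ℝ) * (n : ℝ) ^ (2 * β - 1 / 2)
            = (n : ℝ) ^ (2 * β) * (n : ℝ) ^ ((1 : ℝ) / 2) := by
          rw [← Real.rpow_add hn', mul_comm, ← Real.rpow_add_one hn'.ne']
          congr 1
          ring
        have hnr : (0 : ℝ) < (n : ℝ) ^ ((1 : ℝ) / 2) := by positivity
        have htr : (0 : ℝ) < (t : ℝ) ^ ((1 : ℝ) / 2) := by positivity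
        rw [e1]
        generalize (n : ℝ) ^ ((1 : ℝ) / 2) = u at *
        generalize (t : ℝ) ^ ((1 : ℝ) / 2) = w at *
        generalize (n : ℝ) ^ (2 * β - 1 / 2) = y at *
        field_simp
        linear_combination e2

/-- Lemma 3.3: `T` from a disjoint family.
Fix `δ, β, ε > 0`. There is `n₀` such that for all `n ≥ n₀`, `p ∈ [δ, 1-δ]`, `k` with
`k/n ∈ [δ, 1-δ]`, positive integers `a, t` with `t ≤ k/2` and `a ≤ t^(3/2)·n^(2β-1/2)`,
any fixed `(k-t)`-set `S'`, any family `𝒯` of `m = ⌊(n-k+t)/t⌋` pairwise disjoint `t`-sets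
in `[n]∖S'`, and any interval `A = [z, z+a)`: with probability at least `1 - e^(-n^ε)` over
`G_{n,p}`, `|P_T(e(S'∪T) - e(S') ∈ A) - P(Y ∈ A)| ≤ Δ_A`. -/
theorem stmt_14 (δ β ε : ℝ) (hδ : 0 < δ) (hβ : 0 < β) (hε : 0 < ε) :
    ∃ n₀ : ℕ, ∀ n ≥ n₀, ∀ p : ℝ, δ ≤ p → p ≤ 1 - δ →
      ∀ k : ℕ, δ ≤ (k:ℝ)/n → (k:ℝ)/n ≤ 1 - δ →
      ∀ a t : ℕ, 0 < a → 0 < t → t ≤ k / 2 →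
      (a : ℝ) ≤ (t:ℝ) ^ ((3:ℝ)/2) * (n:ℝ) ^ (2*β - 1/2) →
      ∀ S' : Finset (Fin n), S'.card = k - t →
      ∀ 𝒯 : Finset (Finset (Fin n)),
        𝒯.card = (n - k + t) / t →
        (∀ T ∈ 𝒯, T.card = t ∧ T ⊆ S'ᶜ) →
        (𝒯 : Set (Finset (Fin n))).Pairwise Disjoint →
      ∀ z : ℝ,
        let m : ℕ := (n - k + t) / t
        let PY : ℝ := binomPr ((k - t) * t + t * (t - 1) / 2) p
          (fun j => (j:ℝ) ∈ Set.Ico z (z + a))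
        let ΔA : ℝ := if PY ≤ Real.exp (-(n:ℝ)^ε) / m then Real.exp (-(n:ℝ)^ε) / m
          else (n:ℝ)^(β+ε) / m
        PrGnp n p (fun G =>
            |Pru 𝒯 (fun T => ((edgesIn G (S' ∪ T) : ℝ) - (edgesIn G S' : ℝ)) ∈ Set.Ico z (z + a))
              - PY| ≤ ΔA)
          ≥ 1 - Real.exp (-(n:ℝ)^ε) := by
  obtain ⟨n₀, hn₀⟩ : ∃ n₀ : ℕ, ∀ n ≥ n₀, 0 < n ∧ (2 : ℝ) ≤ (n : ℝ) ^ β ∧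
      4 / Real.sqrt (δ ^ 3 / 2) + 1 ≤ (n : ℝ) ^ ε := by
    rw [← Filter.eventually_atTop]
    filter_upwards [Filter.eventually_gt_atTop 0,
      ((tendsto_rpow_atTop hβ).comp tendsto_natCast_atTop_atTop).eventually_ge_atTop 2,
      ((tendsto_rpow_atTop hε).comp tendsto_natCast_atTop_atTop).eventually_ge_atTop
        (4 / Real.sqrt (δ ^ 3 / 2) + 1)] with n h1 h2 h3
    exact ⟨h1, h2, h3⟩
  refine ⟨n₀, fun n hn p hp hp' k hk hk' a t _ ht htk hat S' hS' 𝒯 h𝒯 hT hd z => ?_⟩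
  obtain ⟨hn0, hnβ, hnε⟩ := hn₀ n hn
  intro m PY ΔA
  have hp0 : 0 ≤ p := by linarith
  have hp1 : p ≤ 1 := by linarith
  have hn' : (0 : ℝ) < n := by exact_mod_cast hn0
  have hkn : k ≤ n := by
    rw [div_le_iff₀ hn'] at hk'
    have : (k : ℝ) ≤ n := by nlinarith
    exact_mod_cast this
  have hm : 0 < m := Nat.div_pos (by omega) ht
  have hm' : (0 : ℝ) < m := by exact_mod_cast hm
  have hPY0 : 0 ≤ PY := binomPr_nonneg _ hp0 hp1 _
  have hcard : (𝒯.card : ℝ) = m := by rw [h𝒯]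
  set P : ℕ → Prop := fun j => (j : ℝ) ∈ Set.Ico z (z + a) with hP
  have hq : ∀ T ∈ 𝒯, binomPr (newPairs S' T).card p P = PY := by
    intro T hTm
    obtain ⟨h1, h2⟩ := hT T hTm
    rw [card_newPairs S' T (Finset.disjoint_left.2 fun x hx hx' =>
      (Finset.mem_compl.1 (h2 hx')) hx), h1, hS']
  have hPru : ∀ G ⊆ completeEdges n,
      Pru 𝒯 (fun T => ((edgesIn G (S' ∪ T) : ℝ) - (edgesIn G S' : ℝ)) ∈ Set.Ico z (z + a))
        = hits S' 𝒯 P G / m := by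
    intro G hG
    rw [Pru_eq_hits hG, hcard]
  by_cases hcase : PY ≤ Real.exp (-(n:ℝ)^ε) / m
  -- If `PY` is tiny, a first-moment bound shows that most likely there is no hit at all;
  -- otherwise Chernoff with parameter `x = ± 2 n ^ (-β)` applies: then `m * PY * x ^ 2 = O(1)`,
  -- while `x * n ^ (β + ε) = 2 n ^ ε` in absolute value.
  · have hΔ : ΔA = Real.exp (-(n:ℝ)^ε) / m := if_pos hcase
    refine PrGnp_ge_s14 hp0 hp1 (g := hits S' 𝒯 P) (fun G _ => hits_nonneg _ _ _ _) ?_ ?_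
    · intro G hG hbad
      refine (hits_eq_zero_or S' 𝒯 P G).resolve_left fun h0 => hbad ?_
      rw [hPru G hG, h0, hΔ, zero_div, zero_sub, abs_neg, abs_of_nonneg hPY0]
      exact hcase
    · rw [hits_mean S' 𝒯 P p PY hq, hcard]
      rw [le_div_iff₀ hm'] at hcase
      linarith
  · have hΔ : ΔA = (n:ℝ)^(β+ε) / m := if_neg hcase
    set x : ℝ := 2 / (n : ℝ) ^ β with hx
    have hnβ0 : (0 : ℝ) < (n : ℝ) ^ β := by positivity
    have hx0 : 0 < x := by positivity
    have hx1 : |x| ≤ 1 := by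
      rw [abs_of_pos hx0, hx, div_le_one hnβ0]
      exact hnβ
    have hxs : x * (n : ℝ) ^ (β + ε) = 2 * (n : ℝ) ^ ε := by
      rw [hx, Real.rpow_add hn']
      field_simp
    have hmean : (m : ℝ) * PY ≤ (n : ℝ) ^ (2 * β) / Real.sqrt (δ ^ 3 / 2) :=
      mean_bound hδ hn0 hp hp' hk hkn ht htk hat z
    have hmx : (m : ℝ) * PY * x ^ 2 ≤ 4 / Real.sqrt (δ ^ 3 / 2) := by
      refine (mul_le_mul_of_nonneg_right hmean (sq_nonneg x)).trans (le_of_eq ?_)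
      have e : (n : ℝ) ^ (2 * β) = ((n : ℝ) ^ β) ^ 2 := by
        rw [mul_comm, Real.rpow_mul hn'.le, Real.rpow_two]
      rw [e, hx]
      field_simp
      norm_num
    have htail : ∀ y : ℝ, |y| ≤ 1 → y ^ 2 = x ^ 2 →
        bernEx (completeEdges n) p
          (fun G => Real.exp (y * (hits S' 𝒯 P G - 𝒯.card * PY) - 2 * (n : ℝ) ^ ε))
        ≤ Real.exp (-(n : ℝ) ^ ε) / 2 := by
      intro y hy hyx
      refine (hits_chernoff S' 𝒯 P hp0 hp1 PY hPY0 hq hd y _ hy).trans ?_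
      rw [hyx, hcard]
      have h1 : (m : ℝ) * PY * x ^ 2 - 2 * (n : ℝ) ^ ε ≤ -(n : ℝ) ^ ε - Real.log 2 := by
        have := Real.log_two_lt_d9
        linarith
      refine (Real.exp_le_exp.2 h1).trans (le_of_eq ?_)
      rw [Real.exp_sub, Real.exp_log two_pos]
    refine PrGnp_ge_s14 hp0 hp1 (g := fun G =>
      Real.exp (x * (hits S' 𝒯 P G - 𝒯.card * PY) - 2 * (n : ℝ) ^ ε)
      + Real.exp (-x * (hits S' 𝒯 P G - 𝒯.card * PY) - 2 * (n : ℝ) ^ ε))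
      (fun G _ => by positivity) ?_ ?_
    · intro G hG hbad
      rw [hPru G hG, hΔ, not_le] at hbad
      have e : hits S' 𝒯 P G / m - PY = (hits S' 𝒯 P G - m * PY) / m := by
        field_simp
      rw [e, abs_div, abs_of_pos hm', div_lt_div_iff_of_pos_right hm'] at hbad
      rw [hcard, ← hxs]
      rcases lt_abs.1 hbad with h | h
      · have h1 := Real.one_le_exp (x := x * (hits S' 𝒯 P G - m * PY) - x * (n : ℝ) ^ (β + ε))
          (by nlinarith)
        have h2 := Real.exp_pos (-x * (hits S' 𝒯 P G - m * PY) - x * (n : ℝ) ^ (β + ε))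
        linarith
      · have h1 := Real.one_le_exp (x := -x * (hits S' 𝒯 P G - m * PY) - x * (n : ℝ) ^ (β + ε))
          (by nlinarith)
        have h2 := Real.exp_pos (x * (hits S' 𝒯 P G - m * PY) - x * (n : ℝ) ^ (β + ε))
        linarith
    · rw [bernEx_add]
      have h1 := htail x hx1 rfl
      have h2 := htail (-x) (by rwa [abs_neg]) (by ring)
      linarith
end
end
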